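/- For Δ drawn from U(n), the probability that Δ is shellable tends to 0 as n → ∞; i.e., with high probability Δ is not shellable. -/

import Mathlib

open scoped Classical

noncomputable section

/-- `Δ` is a simplicial complex on vertex set `Fin n`: all faces are nonempty
and it is downward closed. -/
def IsComplex {n : ℕ} (Δ : Finset (Finset (Fin n))) : Prop :=
  (∀ x ∈ Δ, x.Nonempty) ∧
    ∀ x ∈ Δ, ∀ y : Finset (Fin n), y.Nonempty → y ⊆ x → y ∈ Δ

/-- The finite set of all simplicial complexes on `n` vertices. -/
def allComplexes (n : ℕ) : Finset (Finset (Finset (Fin n))) :=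
  Finset.univ.filter IsComplex

/-- The probability, under the uniform measure `U(n)` on all simplicial
complexes on `n` vertices, of the event `P`. -/
def uniformProb (n : ℕ) (P : Finset (Finset (Fin n)) → Prop) : ℝ :=
  (((allComplexes n).filter P).card : ℝ) / ((allComplexes n).card : ℝ)

/-- `x` is a facet (maximal face) of `Δ`. -/
def IsFacet {n : ℕ} (Δ : Finset (Finset (Fin n))) (x : Finset (Fin n)) : Prop :=
  x ∈ Δ ∧ ∀ y ∈ Δ, x ⊆ y → y = x

/-- `Δ` is shellable: its facets can be ordered `x_1, …, x_m` so that for all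
`i < j`, if `x_i ∩ x_j ≠ ∅` then there is `l < j` with
`x_i ∩ x_j ⊆ x_l ∩ x_j` and `|x_l ∩ x_j| = |x_j| - 1`. -/
def Shellable {n : ℕ} (Δ : Finset (Finset (Fin n))) : Prop :=
  ∃ (m : ℕ) (x : Fin m → Finset (Fin n)),
    Function.Injective x ∧
    (∀ f : Finset (Fin n), IsFacet Δ f ↔ ∃ i, x i = f) ∧
    ∀ i j : Fin m, i < j → (x i ∩ x j).Nonempty →
      ∃ l : Fin m, l < j ∧ x i ∩ x j ⊆ x l ∩ x j ∧ (x l ∩ x j).card + 1 = (x j).card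

namespace ShellAux
open Finset
open scoped FinsetFamily

lemma exp_le_two_rpow (z : ℝ) (hz : 0 ≤ z) : Real.exp z ≤ (2:ℝ) ^ (2 * z) := by
  rw [Real.rpow_def_of_pos (by norm_num)]
  apply Real.exp_le_exp.mpr
  have := Real.log_two_gt_d9
  nlinarith

lemma lists {α : Type*} (S : Finset α) (r z : ℝ) (m : ℕ)
    (h : (S.card : ℝ) ≤ z * 2 ^ m) :
    (((S.powerset.filter (fun T => (T.card : ℝ) ≤ r)).card : ℕ) : ℝ)
      ≤ (2:ℝ) ^ ((m:ℝ) * r + 2 * z) := by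
  have hz : 0 ≤ z := by
    by_contra hz
    have : z * 2 ^ m < 0 := mul_neg_of_neg_of_pos (by linarith) (by positivity)
    have : (0:ℝ) ≤ S.card := by positivity
    linarith
  set x : ℝ := (2:ℝ) ^ (-(m:ℝ)) with hx
  have hx0 : 0 < x := by positivity
  have h1 : ∑ T ∈ S.powerset, x ^ T.card = (x + 1) ^ S.card := by
    have := Finset.sum_pow_mul_eq_add_pow x 1 S
    simpa using this
  have h2 : (((S.powerset.filter (fun T => (T.card : ℝ) ≤ r)).card : ℕ) : ℝ) * (2:ℝ) ^ (-((m:ℝ) * r))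
      ≤ ∑ T ∈ S.powerset, x ^ T.card := by
    calc _ = ∑ T ∈ S.powerset.filter (fun T => (T.card : ℝ) ≤ r), (2:ℝ) ^ (-((m:ℝ) * r)) := by
            simp
      _ ≤ ∑ T ∈ S.powerset.filter (fun T => (T.card : ℝ) ≤ r), x ^ T.card := by
            apply Finset.sum_le_sum
            intro T hT
            rw [Finset.mem_filter] at hT
            rw [hx, ← Real.rpow_natCast, ← Real.rpow_mul (by norm_num)]
            apply Real.rpow_le_rpow_of_exponent_le (by norm_num)
            have : (0:ℝ) ≤ m := by positivity
            nlinarith [hT.2]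
      _ ≤ _ := Finset.sum_le_sum_of_subset_of_nonneg (Finset.filter_subset _ _)
            (fun _ _ _ => by positivity)
  have h3 : (x + 1) ^ S.card ≤ (2:ℝ) ^ (2 * z) := by
    calc (x + 1) ^ S.card ≤ (Real.exp x) ^ S.card :=
          pow_le_pow_left₀ (by positivity) (Real.add_one_le_exp x) _
      _ = Real.exp (S.card * x) := by rw [← Real.exp_nat_mul]
      _ ≤ Real.exp z := by
          apply Real.exp_le_exp.mpr
          calc (S.card : ℝ) * x ≤ (z * 2 ^ m) * x := by gcongr
            _ = z := by
              rw [hx, Real.rpow_neg (by norm_num), Real.rpow_natCast]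
              field_simp
      _ ≤ _ := exp_le_two_rpow z hz
  rw [h1] at h2
  have h4 := h2.trans h3
  rw [Real.rpow_add (by norm_num)]
  rw [Real.rpow_neg (by norm_num)] at h4
  have hp : (0:ℝ) < (2:ℝ) ^ ((m:ℝ) * r) := by positivity
  rw [← div_eq_mul_inv, div_le_iff₀ hp] at h4
  linarith

/-- Derandomised sampling. -/
lemma sampling_aux {α ι : Type*} (G : Finset α) (w : α → ℝ)
    (Bs : ι → Finset α) (β p q : ℝ) (hG : 0 < G.card) (hp : 0 ≤ p) (hq : 0 ≤ q)
    (hβ : β ≤ G.card) (hw : ∀ c, 0 ≤ w c) (t : ℕ) :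
    ∀ H : Finset ι, (∀ h ∈ H, Bs h ⊆ G ∧ β ≤ (Bs h).card) →
    ∃ T ⊆ G, T.card ≤ t ∧
      p * ∑ c ∈ T, w c + q * ((H.filter (fun h => Disjoint T (Bs h))).card : ℝ)
        ≤ p * (t * (∑ c ∈ G, w c) / G.card) + q * (H.card * (1 - β / G.card) ^ t) := by
  induction t with
  | zero =>
    intro H _
    refine ⟨∅, by simp, by simp, by simp⟩
  | succ t ih =>
    intro H hH
    set g : ℝ := (G.card : ℝ) with hg
    have hg0 : 0 < g := by rw [hg]; exact_mod_cast hG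
    set θ : ℝ := 1 - β / g with hθ
    have hθ0 : 0 ≤ θ := by
      rw [hθ, sub_nonneg, div_le_one hg0]; exact hβ
    -- choose the first element
    have hne : G.Nonempty := Finset.card_pos.mp hG
    have hsum : ∑ c ∈ G, (p * w c + q * (((H.filter (fun h => c ∉ Bs h)).card : ℝ) * θ ^ t))
        ≤ ∑ c ∈ G, (p * ((∑ c ∈ G, w c) / g) + q * (H.card * θ ^ (t+1))) := by
      rw [Finset.sum_add_distrib, Finset.sum_const, nsmul_eq_mul, ← Finset.mul_sum,
        ← Finset.mul_sum, ← Finset.sum_mul]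
      have h1 : ∑ c ∈ G, ((H.filter (fun h => c ∉ Bs h)).card : ℝ) ≤ g * (H.card * θ) := by
        have : ∑ c ∈ G, (H.filter (fun h => c ∉ Bs h)).card
            = ∑ h ∈ H, (G.filter (fun c => c ∉ Bs h)).card :=
          Finset.sum_card_bipartiteAbove_eq_sum_card_bipartiteBelow _
        have h2 : ∑ c ∈ G, ((H.filter (fun h => c ∉ Bs h)).card : ℝ)
            = ∑ h ∈ H, ((G.filter (fun c => c ∉ Bs h)).card : ℝ) := by exact_mod_cast this
        rw [h2]
        calc _ ≤ ∑ h ∈ H, (g - β) := by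
              apply Finset.sum_le_sum
              intro h hh
              have e : G.filter (fun c => c ∉ Bs h) = G \ Bs h := by ext; simp
              rw [e, Finset.card_sdiff_of_subset (hH h hh).1,
                Nat.cast_sub (Finset.card_le_card (hH h hh).1)]
              linarith [(hH h hh).2]
          _ = g * (H.card * θ) := by
              simp only [sum_const, nsmul_eq_mul, hθ]
              field_simp
      have h3 : q * ((∑ c ∈ G, ((H.filter (fun h => c ∉ Bs h)).card : ℝ)) * θ ^ t)
          ≤ q * (g * (H.card * θ) * θ ^ t) := by gcongr
      have h4 : p * ∑ c ∈ G, w c = g * (p * ((∑ c ∈ G, w c) / g)) := by field_simp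
      rw [← hg, mul_add, ← h4]
      have h5 : q * (g * (H.card * θ) * θ ^ t) = g * (q * (H.card * θ ^ (t+1))) := by ring
      linarith
    obtain ⟨c, hc, hcle⟩ := Finset.exists_le_of_sum_le hne hsum
    obtain ⟨T, hT, hTc, hTle⟩ := ih (H.filter (fun h => c ∉ Bs h))
      (fun h hh => hH h (Finset.mem_filter.mp hh).1)
    refine ⟨insert c T, Finset.insert_subset hc hT, (Finset.card_insert_le _ _).trans (by omega), ?_⟩
    have e1 : ∑ x ∈ insert c T, w x ≤ w c + ∑ x ∈ T, w x := by
      by_cases hcT : c ∈ T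
      · rw [Finset.insert_eq_of_mem hcT]; linarith [hw c]
      · rw [Finset.sum_insert hcT]
    have e2 : H.filter (fun h => Disjoint (insert c T) (Bs h))
        = (H.filter (fun h => c ∉ Bs h)).filter (fun h => Disjoint T (Bs h)) := by
      ext h; simp [Finset.disjoint_insert_left]; tauto
    rw [e2]
    have e3 : p * ∑ x ∈ insert c T, w x ≤ p * (w c + ∑ x ∈ T, w x) := by gcongr
    have e4 : p * (((t+1 : ℕ):ℝ) * (∑ c ∈ G, w c) / g) =
       p * ((∑ c ∈ G, w c) / g) + p * ((t:ℝ) * (∑ c ∈ G, w c) / g) := by push_cast; ring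
    rw [e4]
    linarith

lemma sampling {α ι : Type*} (G : Finset α) (w : α → ℝ)
    (Bs : ι → Finset α) (β : ℝ) (X Y : ℝ) (hG : 0 < G.card) (hX : 0 < X) (hY : 0 < Y)
    (hβ : β ≤ G.card) (hw : ∀ c, 0 ≤ w c) (t : ℕ)
    (H : Finset ι) (hH : ∀ h ∈ H, Bs h ⊆ G ∧ β ≤ (Bs h).card)
    (hXle : t * (∑ c ∈ G, w c) / G.card ≤ X)
    (hYle : H.card * (1 - β / G.card) ^ t ≤ Y) :
    ∃ T ⊆ G, T.card ≤ t ∧ ∑ c ∈ T, w c ≤ 2 * X ∧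
      ∃ Ms ⊆ H, (∀ h ∈ H, h ∉ Ms → ∃ d, d ∈ T ∧ d ∈ Bs h) ∧ (Ms.card : ℝ) ≤ 2 * Y := by
  obtain ⟨T, h1, h2, h3⟩ := sampling_aux G w Bs β X⁻¹ Y⁻¹ hG (by positivity) (by positivity) hβ hw t H hH
  refine ⟨T, h1, h2, ?_⟩
  have a1 : X⁻¹ * (t * (∑ c ∈ G, w c) / G.card) ≤ 1 := by
    rw [inv_mul_le_iff₀ hX]; linarith
  have a2 : Y⁻¹ * (H.card * (1 - β / G.card) ^ t) ≤ 1 := by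
    rw [inv_mul_le_iff₀ hY]; linarith
  have b1 : 0 ≤ X⁻¹ * ∑ c ∈ T, w c := mul_nonneg (by positivity) (Finset.sum_nonneg fun c _ => hw c)
  have b2 : 0 ≤ Y⁻¹ * ((H.filter (fun h => Disjoint T (Bs h))).card : ℝ) := by positivity
  constructor
  · have : X⁻¹ * ∑ c ∈ T, w c ≤ 2 := by linarith
    rw [inv_mul_le_iff₀ hX] at this; linarith
  · refine ⟨H.filter (fun h => Disjoint T (Bs h)), filter_subset _ _, ?_, ?_⟩
    · intro h hh hn
      rw [mem_filter, not_and] at hn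
      exact Finset.not_disjoint_iff.mp (hn hh)
    have : Y⁻¹ * ((H.filter (fun h => Disjoint T (Bs h))).card : ℝ) ≤ 2 := by linarith
    rw [inv_mul_le_iff₀ hY] at this; linarith

end ShellAux

namespace ShellAux
open Finset
open scoped FinsetFamily

lemma dcount {α β : Type*} (S : Finset α) (T : Finset β) (r : α → β → Prop)
    {i1 : ∀ a, DecidablePred (r a)} {i2 : ∀ b, DecidablePred (fun a => r a b)} :
    ∑ a ∈ S, (@Finset.filter _ (r a) (i1 a) T).card
      = ∑ b ∈ T, (@Finset.filter _ (fun a => r a b) (i2 b) S).card := by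
  have := Finset.sum_card_bipartiteAbove_eq_sum_card_bipartiteBelow (s := S) (t := T) r
  unfold bipartiteAbove bipartiteBelow at this
  convert this

/-- `(j+1)`-sets all of whose `j`-subsets are in `C`. -/
def Kf {n : ℕ} (j : ℕ) (C : Finset (Finset (Fin n))) : Finset (Finset (Fin n)) :=
  univ.filter (fun x => x.card = j + 1 ∧ ∀ c, c ⊆ x → c.card = j → c ∈ C)

lemma mem_Kf {n j : ℕ} {C : Finset (Finset (Fin n))} {x : Finset (Fin n)} :
    x ∈ Kf j C ↔ x.card = j + 1 ∧ ∀ c, c ⊆ x → c.card = j → c ∈ C := by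
  simp [Kf]

lemma mem_shadow' {n j : ℕ} {A : Finset (Finset (Fin n))} (hA : ∀ x ∈ A, x.card = j + 1)
    {c : Finset (Fin n)} : c ∈ ∂ A ↔ ∃ x ∈ A, c ⊆ x ∧ c.card = j := by
  rw [mem_shadow_iff_exists_mem_card_add_one]
  constructor
  · rintro ⟨s, hs, h1, h2⟩
    exact ⟨s, hs, h1, by have := hA s hs; omega⟩
  · rintro ⟨s, hs, h1, h2⟩
    exact ⟨s, hs, h1, by have := hA s hs; omega⟩

lemma shadow_card_eq {n j : ℕ} {A : Finset (Finset (Fin n))} (hA : ∀ x ∈ A, x.card = j + 1)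
    {c : Finset (Fin n)} (hc : c ∈ ∂ A) : c.card = j := by
  obtain ⟨x, _, _, h⟩ := (mem_shadow' hA).mp hc
  exact h

lemma subset_Kf {n j : ℕ} {A C : Finset (Finset (Fin n))} (hA : ∀ x ∈ A, x.card = j + 1)
    (h : ∂ A ⊆ C) : A ⊆ Kf j C := by
  intro x hx
  rw [mem_Kf]
  exact ⟨hA x hx, fun c hc hcj => h ((mem_shadow' hA).mpr ⟨x, hx, hc, hcj⟩)⟩

lemma Kf_card {n j : ℕ} {C : Finset (Finset (Fin n))} : ∀ x ∈ Kf j C, x.card = j + 1 :=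
  fun _ hx => (mem_Kf.mp hx).1

lemma shadow_Kf {n j : ℕ} (C : Finset (Finset (Fin n))) : ∂ (Kf j C) ⊆ C := by
  intro c hc
  obtain ⟨x, hx, h1, h2⟩ := (mem_shadow' Kf_card).mp hc
  exact (mem_Kf.mp hx).2 c h1 h2

lemma Kf_mono {n j : ℕ} {C C' : Finset (Finset (Fin n))} (h : C ⊆ C') : Kf j C ⊆ Kf j C' := by
  intro x hx
  rw [mem_Kf] at *
  exact ⟨hx.1, fun c a b => h (hx.2 c a b)⟩

lemma down_card {n j : ℕ} {x : Finset (Fin n)} (hx : x.card = j + 1) :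
    (univ.filter (fun c : Finset (Fin n) => c ⊆ x ∧ c.card = j)).card = j + 1 := by
  have : univ.filter (fun c : Finset (Fin n) => c ⊆ x ∧ c.card = j) = powersetCard j x := by
    ext c; simp [mem_powersetCard]
  rw [this, card_powersetCard, hx, Nat.choose_succ_self_right]

lemma up_card_le {n j : ℕ} {c : Finset (Fin n)} (hc : c.card = j) :
    (univ.filter (fun x : Finset (Fin n) => c ⊆ x ∧ x.card = j + 1)).card ≤ n - j := by
  have : univ.filter (fun x : Finset (Fin n) => c ⊆ x ∧ x.card = j + 1)
      ⊆ (cᶜ).image (fun v => insert v c) := by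
    intro x hx
    simp only [mem_filter, mem_univ, true_and] at hx
    have h1 : (x \ c).card = 1 := by rw [card_sdiff_of_subset hx.1]; omega
    obtain ⟨v, hv⟩ := card_eq_one.mp h1
    have hv' : v ∈ x \ c := by rw [hv]; simp
    rw [mem_image]
    refine ⟨v, by simp at hv' ⊢; exact hv'.2, ?_⟩
    rw [insert_eq, ← hv, sdiff_union_of_subset hx.1]
  calc _ ≤ _ := card_le_card this
    _ ≤ _ := card_image_le
    _ = n - j := by rw [card_compl, hc, Fintype.card_fin]

lemma lym {n j : ℕ} {A : Finset (Finset (Fin n))} (hA : ∀ x ∈ A, x.card = j + 1) :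
    A.card * (j + 1) ≤ (∂ A).card * (n - j) := by
  have h1 : ∑ x ∈ A, ((∂ A).filter (fun c => c ⊆ x)).card
      = ∑ c ∈ ∂ A, (A.filter (fun x => c ⊆ x)).card :=
    dcount _ _ (fun x c : Finset (Fin n) => c ⊆ x)
  have h2 : ∀ x ∈ A, ((∂ A).filter (fun c => c ⊆ x)).card = j + 1 := by
    intro x hx
    rw [← down_card (hA x hx)]
    congr 1
    ext c
    simp only [mem_filter, mem_univ, true_and]
    constructor
    · rintro ⟨a, b⟩; exact ⟨b, shadow_card_eq hA a⟩
    · rintro ⟨a, b⟩; exact ⟨(mem_shadow' hA).mpr ⟨x, hx, a, b⟩, a⟩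
  have h3 : ∀ c ∈ ∂ A, (A.filter (fun x => c ⊆ x)).card ≤ n - j := by
    intro c hc
    refine le_trans (card_le_card ?_) (up_card_le (shadow_card_eq hA hc))
    intro x hx
    simp only [mem_filter, mem_univ, true_and] at *
    exact ⟨hx.2, hA x hx.1⟩
  rw [sum_congr rfl h2, sum_const, smul_eq_mul] at h1
  rw [h1]
  calc _ ≤ ∑ c ∈ ∂ A, (n - j) := sum_le_sum h3
    _ = _ := by simp

lemma card_le_shadow {n j : ℕ} (hn : n ≤ 2 * j + 1) {A : Finset (Finset (Fin n))}
    (hA : ∀ x ∈ A, x.card = j + 1) : A.card ≤ (∂ A).card := by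
  have := lym hA
  have h2 : (∂ A).card * (n - j) ≤ (∂ A).card * (j + 1) := Nat.mul_le_mul_left _ (by omega)
  exact Nat.le_of_mul_le_mul_right (this.trans h2) (by omega)

lemma Kf_card_le {n j : ℕ} (hn : n ≤ 2 * j + 1) (C : Finset (Finset (Fin n))) :
    (Kf j C).card ≤ C.card :=
  (card_le_shadow hn Kf_card).trans (card_le_card (shadow_Kf C))

lemma exists_matching {n j : ℕ} (hn : n ≤ 2 * j + 1) :
    ∃ φ : Finset (Fin n) → Finset (Fin n),
      (∀ x y, x.card = j + 1 → y.card = j + 1 → φ x = φ y → x = y) ∧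
      ∀ x, x.card = j + 1 → φ x ⊆ x ∧ (φ x).card = j := by
  have hall := (Finset.all_card_le_biUnion_card_iff_exists_injective
    (fun x : {x : Finset (Fin n) // x.card = j + 1} => ∂ {x.1})).mp (by
      intro s
      have e : s.biUnion (fun x => ∂ {x.1}) = ∂ (s.image Subtype.val) := by
        ext c
        simp only [mem_biUnion, mem_shadow_iff_exists_mem_card_add_one, mem_singleton, mem_image]
        constructor
        · rintro ⟨x, hx, y, rfl, h⟩
          exact ⟨x.1, ⟨x, hx, rfl⟩, h⟩
        · rintro ⟨y, ⟨x, hx, rfl⟩, h⟩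
          exact ⟨x, hx, x.1, rfl, h⟩
      rw [e, ← card_image_of_injective s Subtype.val_injective]
      apply card_le_shadow hn
      intro x hx
      obtain ⟨y, _, rfl⟩ := mem_image.mp hx
      exact y.2)
  obtain ⟨f, hf, hf2⟩ := hall
  refine ⟨fun x => if h : x.card = j + 1 then f ⟨x, h⟩ else ∅, ?_, ?_⟩
  · intro x y hx hy hxy
    simp only [hx, hy, dif_pos] at hxy
    exact congrArg Subtype.val (hf hxy)
  · intro x hx
    simp only [hx, dif_pos]
    obtain ⟨y, hy, h1, h2⟩ := (mem_shadow' (j := j) (A := {x}) (by simpa using hx)).mp (hf2 ⟨x, hx⟩)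
    rw [mem_singleton] at hy
    subst hy
    exact ⟨h1, h2⟩

open scoped Pointwise

lemma exists_perm {n j : ℕ} {x c c' : Finset (Fin n)} (hx : x.card = j + 1)
    (hc : c ⊆ x ∧ c.card = j) (hc' : c' ⊆ x ∧ c'.card = j) :
    ∃ σ : Equiv.Perm (Fin n), σ • x = x ∧ σ • c = c' := by
  have key : ∀ c, c ⊆ x ∧ c.card = j → ∃ a ∈ x, c = x \ {a} := by
    intro c hc
    have h1 : (x \ c).card = 1 := by rw [card_sdiff_of_subset hc.1]; omega
    obtain ⟨v, hv⟩ := card_eq_one.mp h1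
    have hv' : v ∈ x \ c := by rw [hv]; simp
    exact ⟨v, (mem_sdiff.mp hv').1, by rw [← hv, Finset.sdiff_sdiff_eq_self hc.1]⟩
  obtain ⟨a, ha, rfl⟩ := key c hc
  obtain ⟨b, hb, rfl⟩ := key c' hc'
  have hx' : Equiv.swap a b • x = x := by
    apply eq_of_subset_of_card_le
    · intro y hy
      obtain ⟨z, hz, rfl⟩ := mem_smul_finset.mp hy
      simp only [Equiv.Perm.smul_def, Equiv.swap_apply_def]
      split_ifs <;> assumption
    · rw [card_smul_finset]
  refine ⟨Equiv.swap a b, hx', ?_⟩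
  rw [smul_finset_sdiff, hx', smul_finset_singleton]
  simp

lemma averaging {n j : ℕ} (hn : n ≤ 2 * j + 1) :
    ∃ Ψ : Finset (Finset (Fin n) → Finset (Fin n)), Ψ.card ≤ n.factorial ∧
      (∀ ψ ∈ Ψ, (∀ x y, x.card = j + 1 → y.card = j + 1 → ψ x = ψ y → x = y) ∧
        ∀ x, x.card = j + 1 → ψ x ⊆ x ∧ (ψ x).card = j) ∧
      ∀ A B : Finset (Finset (Fin n)), (∀ x ∈ A, x.card = j + 1) →
        ∃ ψ ∈ Ψ, (j + 1) * (A.filter (fun x => ψ x ∈ B)).card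
          ≤ ∑ c ∈ B, (A.filter (fun x => c ⊆ x)).card := by
  obtain ⟨φ, h1, h2⟩ := exists_matching hn
  set ψ : Equiv.Perm (Fin n) → Finset (Fin n) → Finset (Fin n) :=
    fun π x => π • φ (π⁻¹ • x) with hψ
  have hprop : ∀ π x, x.card = j + 1 → ψ π x ⊆ x ∧ (ψ π x).card = j := by
    intro π x hx
    have := h2 (π⁻¹ • x) (by rw [card_smul_finset, hx])
    refine ⟨?_, by rw [hψ]; simp only [card_smul_finset]; exact this.2⟩
    have := smul_finset_subset_smul_finset (a := π) this.1
    rwa [smul_inv_smul] at this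
  refine ⟨univ.image ψ, ?_, ?_, ?_⟩
  · refine card_image_le.trans ?_
    rw [card_univ, Fintype.card_perm, Fintype.card_fin]
  · intro f hf
    obtain ⟨π, _, rfl⟩ := mem_image.mp hf
    refine ⟨?_, hprop π⟩
    intro x y hx hy hxy
    have h3 : φ (π⁻¹ • x) = φ (π⁻¹ • y) := smul_left_cancel π hxy
    have h4 := h1 _ _ (by rw [card_smul_finset, hx]) (by rw [card_smul_finset, hy]) h3
    exact smul_left_cancel π⁻¹ h4
  · intro A B hA
    have hcount : ∀ x, x.card = j + 1 → ∀ c, c ⊆ x ∧ c.card = j →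
        (j + 1) * (univ.filter (fun π => ψ π x = c)).card = n.factorial := by
      intro x hx c hc
      have heq : ∀ c', c' ⊆ x ∧ c'.card = j → (univ.filter (fun π => ψ π x = c')).card
          = (univ.filter (fun π => ψ π x = c)).card := by
        intro c' hc'
        obtain ⟨σ, hs1, hs2⟩ := exists_perm hx hc hc'
        symm
        apply card_bij (fun π _ => σ * π)
        · intro π hπ
          simp only [mem_filter, mem_univ, true_and, hψ] at hπ ⊢
          have hs3 : σ⁻¹ • x = x := by
            conv_lhs => rw [← hs1]
            rw [inv_smul_smul]
          rw [mul_inv_rev, mul_smul, mul_smul, hs3, hπ, hs2]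
        · intro a _ b _ h
          exact mul_left_cancel h
        · intro π hπ
          refine ⟨σ⁻¹ * π, ?_, by simp⟩
          simp only [mem_filter, mem_univ, true_and, hψ] at hπ ⊢
          rw [mul_inv_rev, inv_inv, mul_smul, mul_smul, hs1, hπ, ← hs2, inv_smul_smul]
      have hsum : (univ : Finset (Equiv.Perm (Fin n))).card
          = ∑ c' ∈ univ.filter (fun c : Finset (Fin n) => c ⊆ x ∧ c.card = j),
            (univ.filter (fun π => ψ π x = c')).card := by
        apply card_eq_sum_card_fiberwise
        intro π _
        simpa using hprop π x hx
      rw [card_univ, Fintype.card_perm, Fintype.card_fin] at hsum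
      rw [hsum, sum_congr rfl (fun c' hc' => heq c' (by simpa using hc')), sum_const, down_card hx,
        smul_eq_mul]
    have htot : ∑ π : Equiv.Perm (Fin n), (j + 1) * (A.filter (fun x => ψ π x ∈ B)).card
        ≤ ∑ π : Equiv.Perm (Fin n), ∑ c ∈ B, (A.filter (fun x => c ⊆ x)).card := by
      rw [sum_const, card_univ, Fintype.card_perm, Fintype.card_fin, smul_eq_mul, ← mul_sum]
      have e1 : ∑ π : Equiv.Perm (Fin n), (A.filter (fun x => ψ π x ∈ B)).card
          = ∑ x ∈ A, (univ.filter (fun π : Equiv.Perm (Fin n) => ψ π x ∈ B)).card :=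
        dcount _ _ (fun π x => ψ π x ∈ B)
      have e2 : ∑ c ∈ B, (A.filter (fun x => c ⊆ x)).card
          = ∑ x ∈ A, (B.filter (fun c => c ⊆ x)).card :=
        dcount _ _ (fun c x : Finset (Fin n) => c ⊆ x)
      rw [e1, e2, mul_sum, mul_sum]
      apply sum_le_sum
      intro x hx
      have e3 : (univ.filter (fun π : Equiv.Perm (Fin n) => ψ π x ∈ B)).card
          = ∑ c ∈ B.filter (fun c => c ⊆ x ∧ c.card = j), (univ.filter (fun π => ψ π x = c)).card := by
        rw [card_eq_sum_card_fiberwise (f := fun π => ψ π x) (t := B.filter (fun c => c ⊆ x ∧ c.card = j))]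
        · apply sum_congr rfl
          intro c hc
          congr 1
          ext π
          simp only [mem_filter, mem_univ, true_and] at hc ⊢
          constructor
          · exact fun h => h.2
          · intro h; exact ⟨h ▸ hc.1, h⟩
        · intro π hπ
          simp only [coe_filter, mem_univ, true_and, Set.mem_setOf_eq] at hπ ⊢
          exact ⟨hπ, hprop π x (hA x hx)⟩
      rw [e3, mul_sum, sum_congr rfl (fun c hc => hcount x (hA x hx) c (mem_filter.mp hc).2),
        sum_const, smul_eq_mul, mul_comm]
      apply Nat.mul_le_mul_left
      apply card_le_card
      intro c hc
      simp only [mem_filter] at hc ⊢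
      exact ⟨hc.1, hc.2.1⟩
    obtain ⟨π, _, hπ⟩ := Finset.exists_le_of_sum_le univ_nonempty htot
    exact ⟨ψ π, mem_image_of_mem _ (mem_univ _), hπ⟩

end ShellAux

namespace ShellAux
open Finset
open scoped FinsetFamily

def Par (n m : ℕ) : Prop := n ^ 50 ≤ 2 ^ m ∧ 10 ^ 8 * m ^ 6 ≤ n ∧ 1 ≤ m

lemma Par.n_large {n m : ℕ} (h : Par n m) : 10 ^ 8 ≤ n := by
  have : 1 ≤ m ^ 6 := Nat.one_le_pow _ _ h.2.2
  have := h.2.1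
  omega

/-- `(j+1)`-sets containing an element of `C`. -/
def Uf {n : ℕ} (j : ℕ) (C : Finset (Finset (Fin n))) : Finset (Finset (Fin n)) :=
  univ.filter (fun x => x.card = j + 1 ∧ ∃ c ∈ C, c ⊆ x)

lemma mem_Uf {n j : ℕ} {C : Finset (Finset (Fin n))} {x : Finset (Fin n)} :
    x ∈ Uf j C ↔ x.card = j + 1 ∧ ∃ c ∈ C, c ⊆ x := by
  simp [Uf]

lemma Uf_mono {n j : ℕ} {C C' : Finset (Finset (Fin n))} (h : C ⊆ C') : Uf j C ⊆ Uf j C' := by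
  intro x hx
  rw [mem_Uf] at *
  obtain ⟨h1, c, hc, h2⟩ := hx
  exact ⟨h1, c, h hc, h2⟩

lemma Uf_card_le {n j : ℕ} {C : Finset (Finset (Fin n))} (hC : ∀ c ∈ C, c.card = j) :
    (Uf j C).card ≤ C.card * n := by
  have : Uf j C ⊆ C.biUnion
      (fun c => univ.filter (fun x : Finset (Fin n) => c ⊆ x ∧ x.card = j + 1)) := by
    intro x hx
    obtain ⟨h1, c, hc, h2⟩ := mem_Uf.mp hx
    exact mem_biUnion.mpr ⟨c, hc, by simp [h1, h2]⟩
  refine (card_le_card this).trans (card_biUnion_le_card_mul _ _ _ ?_)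
  intro c hc
  exact (up_card_le (hC c hc)).trans (Nat.sub_le _ _)

/-- degree of `c` in the family `A` -/
def deg {n : ℕ} (A : Finset (Finset (Fin n))) (c : Finset (Fin n)) : ℕ :=
  (A.filter (fun x => c ⊆ x)).card

lemma sum_deg {n j : ℕ} {A G : Finset (Finset (Fin n))} (hA : A ⊆ Kf j G)
    (hG : ∀ c ∈ G, c.card = j) :
    ∑ c ∈ G, deg A c = A.card * (j + 1) := by
  unfold deg
  rw [dcount G A (fun c x : Finset (Fin n) => c ⊆ x) (i2 := fun x => inferInstance)]
  rw [sum_congr rfl (g := fun _ => j + 1), sum_const, smul_eq_mul]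
  intro x hx
  have hx := mem_Kf.mp (hA hx)
  rw [← down_card hx.1]
  congr 1
  ext c
  simp only [mem_filter, mem_univ, true_and]
  constructor
  · rintro ⟨a, b⟩; exact ⟨b, hG c a⟩
  · rintro ⟨a, b⟩; exact ⟨hx.2 c a b, a⟩

lemma ball_card {n j : ℕ} {A : Finset (Finset (Fin n))} (hA : ∀ x ∈ A, x.card = j + 1)
    {c : Finset (Fin n)} (hc : c.card = j) :
    deg A c * j ≤ (∂ (A.filter (fun x => c ⊆ x))).card := by
  set S := A.filter (fun x => c ⊆ x) with hS
  set f : Finset (Fin n) → Finset (Finset (Fin n)) :=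
    fun x => (univ.filter (fun d : Finset (Fin n) => d ⊆ x ∧ d.card = j)).erase c with hf
  have hsub : S.biUnion f ⊆ ∂ S := by
    intro d hd
    obtain ⟨x, hx, hd⟩ := mem_biUnion.mp hd
    simp only [hf, mem_erase, mem_filter, mem_univ, true_and] at hd
    rw [mem_shadow' (j := j) (fun x hx => hA x (mem_filter.mp hx).1)]
    exact ⟨x, hx, hd.2⟩
  have hdis : ∀ x ∈ S, ∀ y ∈ S, x ≠ y → Disjoint (f x) (f y) := by
    intro x hx y hy hxy
    rw [Finset.disjoint_left]
    intro d hd1 hd2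
    simp only [hf, mem_erase, mem_filter, mem_univ, true_and] at hd1 hd2
    obtain ⟨hx1, hx2⟩ := mem_filter.mp hx
    obtain ⟨hy1, hy2⟩ := mem_filter.mp hy
    have hcard : (x ∩ y).card ≤ j := by
      by_contra hlt
      have h1 : x ∩ y = x := eq_of_subset_of_card_le inter_subset_left (by rw [hA x hx1]; omega)
      have h2 : x ∩ y = y := eq_of_subset_of_card_le inter_subset_right (by rw [hA y hy1]; omega)
      exact hxy (h1.symm.trans h2)
    have e1 : c = x ∩ y := eq_of_subset_of_card_le (subset_inter hx2 hy2) (by omega)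
    have e2 : d = x ∩ y := eq_of_subset_of_card_le (subset_inter hd1.2.1 hd2.2.1) (by omega)
    exact hd1.1 (e2.trans e1.symm)
  refine le_trans ?_ (card_le_card hsub)
  rw [card_biUnion hdis]
  have : ∀ x ∈ S, j = (f x).card := by
    intro x hx
    obtain ⟨hx1, hx2⟩ := mem_filter.mp hx
    simp only [hf]
    rw [card_erase_of_mem (by simp [hx2, hc]), down_card (hA x hx1)]
    omega
  rw [← sum_congr rfl this, sum_const, smul_eq_mul]
  rfl

/-- the reconstruction from certificates -/
def recon {n : ℕ} (j : ℕ) (T Ω Ms : Finset (Finset (Fin n))) : Finset (Finset (Fin n)) :=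
  ∂ (Uf j T \ Ω) ∪ Ms

set_option maxHeartbeats 1000000 in
lemma approx_single {n m j g b : ℕ} (hp : Par n m) (hn : n ≤ 2 * j + 1)
    {A : Finset (Finset (Fin n))} (hA : ∀ x ∈ A, x.card = j + 1) (hg : (∂ A).card = g)
    (hb : (Kf j (∂ A)).card + b = g) (hg30 : n ^ 30 ≤ g) (hthick : g ≤ 5 * n * b) :
    ∃ T Ω Ms, T ⊆ ∂ A ∧ (T.card : ℝ) ≤ 129 * m ^ 2 * g / n ^ 2 ∧
      Ω ⊆ Uf j (∂ A) ∧ (Ω.card : ℝ) ≤ 258 * m ^ 2 * b / n ∧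
      Ms ⊆ ∂ A ∧ (Ms.card : ℝ) ≤ 2 * g / n ^ 50 ∧
      recon j T Ω Ms ⊆ ∂ A ∧
      ∀ c ∈ ∂ A, c ∉ recon j T Ω Ms → 16 * m * deg (Kf j (∂ A)) c < j + 1 := by
  have hnl := hp.n_large
  have hm1 := hp.2.2
  set G := ∂ A with hG
  set K := Kf j G with hK
  have hGc : ∀ c ∈ G, c.card = j := fun c hc => shadow_card_eq hA hc
  have hn0 : 0 < n := by omega
  have hg0 : 0 < g := lt_of_lt_of_le (by positivity) hg30
  have hb0 : 0 < b := by
    rcases Nat.eq_zero_or_pos b with h | h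
    · subst h; omega
    · exact h
  have hjn : j + 1 ≤ n := by
    have : G.Nonempty := card_pos.mp (by omega)
    obtain ⟨c, hc⟩ := this
    obtain ⟨x, hx, _⟩ := (mem_shadow' hA).mp hc
    rw [← hA x hx]
    simpa using card_le_univ x
  have rn : (10:ℝ) ^ 8 ≤ n := by exact_mod_cast hnl
  have rm : (1:ℝ) ≤ m := by exact_mod_cast hm1
  have rg : (n:ℝ) ^ 30 ≤ g := by exact_mod_cast hg30
  have rg0 : (0:ℝ) < g := by exact_mod_cast hg0
  have rb0 : (0:ℝ) < b := by exact_mod_cast hb0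
  have rn0 : (0:ℝ) < n := by linarith
  set w : Finset (Fin n) → ℝ := fun c =>
    ((univ.filter (fun x : Finset (Fin n) => c ⊆ x ∧ x.card = j + 1 ∧ x ∉ K)).card : ℝ) with hw
  set H := G.filter (fun c => j + 1 ≤ 16 * m * deg K c) with hH
  set Bs : Finset (Fin n) → Finset (Finset (Fin n)) :=
    fun c => ∂ (K.filter (fun x => c ⊆ x)) with hBs
  set β : ℝ := (n:ℝ) ^ 2 / (128 * m) with hβ
  have hβ0 : 0 < β := by positivity
  set t : ℕ := ⌈128 * (m:ℝ) ^ 2 * g / n ^ 2⌉₊ with ht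
  have ht1 : 128 * (m:ℝ) ^ 2 * g / n ^ 2 ≤ t := Nat.le_ceil _
  have hlarge : (n:ℝ) ^ 2 ≤ g := le_trans (pow_le_pow_right₀ (by linarith) (by norm_num)) rg
  have ht2 : (t:ℝ) ≤ 129 * m ^ 2 * g / n ^ 2 := by
    have h1 : (t:ℝ) < 128 * (m:ℝ) ^ 2 * g / n ^ 2 + 1 := Nat.ceil_lt_add_one (by positivity)
    have h2 : (1:ℝ) ≤ m ^ 2 * g / n ^ 2 := by
      rw [le_div_iff₀ (by positivity), one_mul]
      have : (1:ℝ) ≤ m ^ 2 := one_le_pow₀ rm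
      nlinarith
    have h3 : 129 * (m:ℝ) ^ 2 * g / n ^ 2 = 128 * (m:ℝ) ^ 2 * g / n ^ 2 + m ^ 2 * g / n ^ 2 := by ring
    linarith
  have hBsub : ∀ c, Bs c ⊆ G := fun c =>
    (shadow_mono (filter_subset _ _)).trans (shadow_Kf G)
  have hHB : ∀ c ∈ H, Bs c ⊆ G ∧ β ≤ (Bs c).card := by
    intro c hc
    refine ⟨hBsub c, ?_⟩
    obtain ⟨hc1, hc2⟩ := mem_filter.mp hc
    have h1 := ball_card (A := K) Kf_card (hGc c hc1)
    have h1' : (deg K c : ℝ) * j ≤ (Bs c).card := by exact_mod_cast h1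
    have h2 : ((j:ℝ) + 1) ≤ 16 * m * deg K c := by exact_mod_cast hc2
    have h3 : (n:ℝ) ≤ 2 * j + 1 := by exact_mod_cast hn
    have h4 : (n:ℝ) / (32 * m) ≤ deg K c := by
      rw [div_le_iff₀ (by positivity)]
      nlinarith
    calc β = (n:ℝ) / (32 * m) * (n / 4) := by rw [hβ]; field_simp; norm_num
      _ ≤ deg K c * j := by
        apply mul_le_mul h4 (by linarith) (by positivity) (by positivity)
      _ ≤ _ := h1'
  have hW : ∑ c ∈ G, w c ≤ n * b := by
    have h1 : ∑ c ∈ G, deg K c = K.card * (j + 1) := sum_deg (le_refl _) hGc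
    have h2 : ∀ c ∈ G, w c + deg K c ≤ (j:ℝ) + 1 := by
      intro c hc
      have : (univ.filter (fun x : Finset (Fin n) => c ⊆ x ∧ x.card = j + 1 ∧ x ∉ K)).card + deg K c
          ≤ n - j := by
        unfold deg
        rw [← card_union_of_disjoint]
        · refine le_trans (card_le_card ?_) (up_card_le (hGc c hc))
          intro x hx
          simp only [mem_union, mem_filter, mem_univ, true_and] at hx ⊢
          rcases hx with h | h
          · exact ⟨h.1, h.2.1⟩
          · exact ⟨h.2, Kf_card x h.1⟩
        · rw [Finset.disjoint_left]
          intro x hx hy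
          simp only [mem_filter, mem_univ, true_and] at hx hy
          exact hx.2.2 hy.1
      have h3 : (univ.filter (fun x : Finset (Fin n) => c ⊆ x ∧ x.card = j + 1 ∧ x ∉ K)).card + deg K c
          ≤ j + 1 := by omega
      simp only [hw]
      exact_mod_cast h3
    have h3 := sum_le_sum h2
    rw [sum_add_distrib, sum_const, nsmul_eq_mul, hg] at h3
    have h4 : ∑ c ∈ G, (deg K c : ℝ) = K.card * ((j:ℝ) + 1) := by exact_mod_cast h1
    rw [h4] at h3
    have h5 : (K.card : ℝ) + b = g := by exact_mod_cast hb
    have h6 : (j:ℝ) + 1 ≤ n := by exact_mod_cast hjn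
    have h7 : ∑ c ∈ G, w c ≤ ((j:ℝ) + 1) * b := by rw [← h5] at h3; nlinarith
    exact h7.trans (by gcongr)
  obtain ⟨T, hT1, hT2, hT3, Ms, hMs, hT5, hT4⟩ := sampling G w Bs β ((t:ℝ) * (n * b) / g) ((g:ℝ) / n ^ 50)
    (by omega) (by
      have : (0:ℝ) < t := lt_of_lt_of_le (by positivity) ht1
      positivity) (by positivity) (by
      rw [hg, hβ, div_le_iff₀ (by positivity)]
      nlinarith) (fun c => by simp only [hw]; positivity) t H hHB (by rw [hg]; gcongr) (by
      rw [hg]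
      have h1 : (H.card : ℝ) ≤ g := by
        rw [← hg]; exact_mod_cast card_le_card (filter_subset _ _)
      have h2 : (1 - β / g) ^ t ≤ 1 / (n:ℝ) ^ 50 := by
        have hge : 0 ≤ 1 - β / g := by
          rw [sub_nonneg, div_le_one rg0, hβ, div_le_iff₀ (by positivity)]
          nlinarith
        calc (1 - β / g) ^ t ≤ (Real.exp (-(β / g))) ^ t := by
              apply pow_le_pow_left₀ hge
              have := Real.add_one_le_exp (-(β / g))
              linarith
          _ = Real.exp (t * (-(β / g))) := by rw [← Real.exp_nat_mul]
          _ ≤ Real.exp (-(m:ℝ)) := by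
              apply Real.exp_le_exp.mpr
              have : (m:ℝ) ≤ t * (β / g) := by
                calc (m:ℝ) = 128 * (m:ℝ) ^ 2 * g / n ^ 2 * (β / g) := by
                      rw [hβ]; field_simp
                  _ ≤ _ := by gcongr
              linarith
          _ ≤ 1 / (n:ℝ) ^ 50 := by
              rw [Real.exp_neg, ← one_div]
              apply one_div_le_one_div_of_le (by positivity)
              have h3 : (n:ℝ) ^ 50 ≤ 2 ^ m := by exact_mod_cast hp.1
              refine h3.trans ?_
              have : (2:ℝ) ^ m ≤ (Real.exp 1) ^ m :=
                pow_le_pow_left₀ (by norm_num) (by linarith [Real.add_one_le_exp 1]) _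
              rwa [← Real.exp_nat_mul, mul_one] at this
      calc (H.card : ℝ) * (1 - β / g) ^ t ≤ g * (1 / (n:ℝ) ^ 50) := by
            apply mul_le_mul h1 h2 _ (by positivity)
            apply pow_nonneg
            rw [sub_nonneg, div_le_one rg0, hβ, div_le_iff₀ (by positivity)]
            nlinarith
        _ = _ := by ring)
  have hFsub : ∂ (Uf j T \ (Uf j T \ K)) ⊆ G := by
    have : Uf j T \ (Uf j T \ K) ⊆ K := by
      intro x hx; simp only [mem_sdiff] at hx; tauto
    exact (shadow_mono this).trans (shadow_Kf G)
  refine ⟨T, Uf j T \ K, Ms, hT1, ?_, ?_, ?_, ?_, ?_, ?_, ?_⟩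
  · exact le_trans (by exact_mod_cast hT2) ht2
  · exact sdiff_subset.trans (Uf_mono hT1)
  · have h1 : ((Uf j T \ K).card : ℝ) ≤ ∑ c ∈ T, w c := by
      have : (Uf j T \ K).card ≤ ∑ c ∈ T,
          (univ.filter (fun x : Finset (Fin n) => c ⊆ x ∧ x.card = j + 1 ∧ x ∉ K)).card := by
        refine le_trans (card_le_card ?_) card_biUnion_le
        intro x hx
        obtain ⟨hx1, hx2⟩ := mem_sdiff.mp hx
        obtain ⟨h1, c, hc, h2⟩ := mem_Uf.mp hx1
        exact mem_biUnion.mpr ⟨c, hc, by simp [h1, h2, hx2]⟩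
      simp only [hw]
      exact_mod_cast this
    refine h1.trans (hT3.trans ?_)
    calc 2 * ((t:ℝ) * (n * b) / g) ≤ 2 * ((129 * m ^ 2 * g / n ^ 2) * (n * b) / g) := by gcongr
      _ = _ := by field_simp; norm_num
  · exact hMs.trans (filter_subset _ _)
  · refine hT4.trans (le_of_eq (by ring))
  · unfold recon
    exact union_subset hFsub (hMs.trans (filter_subset _ _))
  · intro c hc hcn
    by_contra hhigh
    push Not at hhigh
    have hcH : c ∈ H := mem_filter.mpr ⟨hc, hhigh⟩
    unfold recon at hcn
    rw [mem_union, not_or] at hcn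
    obtain ⟨d, hd1, hd2⟩ := hT5 c hcH hcn.2
    obtain ⟨x, hx, hx1, hx2⟩ := (mem_shadow' (j := j) (fun x hx => Kf_card x (mem_filter.mp hx).1)).mp hd2
    obtain ⟨hxK, hcx⟩ := mem_filter.mp hx
    apply hcn.1
    rw [mem_shadow' (j := j) (fun x hx => (mem_Uf.mp (mem_sdiff.mp hx).1).1)]
    refine ⟨x, ?_, hcx, hGc c hc⟩
    rw [mem_sdiff, mem_sdiff]
    exact ⟨mem_Uf.mpr ⟨Kf_card x hxK, d, hd1, hx1⟩, fun h => h.2 hxK⟩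

end ShellAux

namespace ShellAux
open Finset
open scoped FinsetFamily

/-- All subsets of `S` of size at most `r`. -/
def Lst {α : Type*} (S : Finset α) (r : ℝ) : Finset (Finset α) :=
  S.powerset.filter (fun T => (T.card : ℝ) ≤ r)

lemma mem_Lst {α : Type*} {S T : Finset α} {r : ℝ} :
    T ∈ Lst S r ↔ T ⊆ S ∧ (T.card : ℝ) ≤ r := by
  simp [Lst]

lemma Lst_card {α : Type*} (S : Finset α) (r z : ℝ) (m : ℕ)
    (h : (S.card : ℝ) ≤ z * 2 ^ m) :
    ((Lst S r).card : ℝ) ≤ (2:ℝ) ^ ((m:ℝ) * r + 2 * z) := lists S r z m h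

lemma g_div {n g b : ℕ} (hn : 1 ≤ n) (hthick : g ≤ 5 * n * b) {k : ℕ} (hk : 2 ≤ k) :
    (g:ℝ) / n ^ k ≤ 5 * (b / n) := by
  have rn : (1:ℝ) ≤ n := by exact_mod_cast hn
  have h1 : (g:ℝ) ≤ 5 * n * b := by exact_mod_cast hthick
  calc (g:ℝ) / n ^ k ≤ g / n ^ 2 := by
        apply div_le_div_of_nonneg_left (by positivity) (by positivity)
        exact pow_le_pow_right₀ rn hk
    _ ≤ 5 * n * b / n ^ 2 := by gcongr
    _ = _ := by field_simp

lemma C_le {n m g c k : ℕ} (hp : Par n m) (hk : k ≤ 50) (hC : c ≤ g * n ^ (50 - k)) :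
    (c:ℝ) ≤ (g:ℝ) / n ^ k * 2 ^ m := by
  have hnl := hp.n_large
  have rn : (0:ℝ) < n := by exact_mod_cast (by omega : 0 < n)
  have h1 : (c:ℝ) ≤ g * n ^ (50 - k) := by exact_mod_cast hC
  have h3 : (n:ℝ) ^ 50 ≤ 2 ^ m := by exact_mod_cast hp.1
  calc (c:ℝ) ≤ g * n ^ (50 - k) := h1
    _ = (g:ℝ) / n ^ k * n ^ 50 := by
        rw [div_mul_eq_mul_div, eq_div_iff (by positivity), mul_assoc, ← pow_add]
        congr 2
        omega
    _ ≤ _ := by gcongr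

lemma approx {n m j g b : ℕ} (hp : Par n m) (hn : n ≤ 2 * j + 1)
    {C : Finset (Finset (Fin n))} (hC : ∀ c ∈ C, c.card = j) (hCg : C.card ≤ g * n ^ 20)
    (hg30 : n ^ 30 ≤ g) (hthick : g ≤ 5 * n * b) :
    ∃ 𝓕 : Finset (Finset (Finset (Fin n))), (𝓕.card : ℝ) ≤ (2:ℝ) ^ ((b:ℝ) / (1000 * m)) ∧
      ∀ A : Finset (Finset (Fin n)), (∀ x ∈ A, x.card = j + 1) → ∂ A ⊆ C → (∂ A).card = g →
        (Kf j (∂ A)).card + b = g →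
        ∃ F ∈ 𝓕, F ⊆ ∂ A ∧ ∀ c ∈ ∂ A, c ∉ F → 16 * m * deg (Kf j (∂ A)) c < j + 1 := by
  have hnl := hp.n_large
  have hm1 := hp.2.2
  have rn : (10:ℝ) ^ 8 ≤ n := by exact_mod_cast hnl
  have rm : (1:ℝ) ≤ m := by exact_mod_cast hm1
  set 𝓛 := Lst C (129 * m ^ 2 * g / n ^ 2) ×ˢ Lst (Uf j C) (258 * m ^ 2 * b / n)
    ×ˢ Lst C (2 * g / n ^ 50) with h𝓛
  refine ⟨𝓛.image (fun p => recon j p.1 p.2.1 p.2.2), ?_, ?_⟩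
  · have h0 : (((𝓛.image (fun p => recon j p.1 p.2.1 p.2.2)).card : ℕ) : ℝ) ≤ 𝓛.card := by
      exact_mod_cast card_image_le
    refine h0.trans ?_
    rw [h𝓛, card_product, card_product]
    push_cast
    have e1 := Lst_card C (129 * m ^ 2 * g / n ^ 2) (g / n ^ 30) m (C_le hp (by norm_num) hCg)
    have e2 := Lst_card (Uf j C) (258 * m ^ 2 * b / n) (g / n ^ 29) m (C_le hp (by norm_num) (by
      refine (Uf_card_le hC).trans ?_
      calc C.card * n ≤ g * n ^ 20 * n := Nat.mul_le_mul_right _ hCg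
        _ = _ := by ring))
    have e3 := Lst_card C (2 * g / n ^ 50) (g / n ^ 30) m (C_le hp (by norm_num) hCg)
    calc _ ≤ (2:ℝ) ^ ((m:ℝ) * (129 * m ^ 2 * g / n ^ 2) + 2 * (g / n ^ 30)) *
          ((2:ℝ) ^ ((m:ℝ) * (258 * m ^ 2 * b / n) + 2 * (g / n ^ 29)) *
            (2:ℝ) ^ ((m:ℝ) * (2 * g / n ^ 50) + 2 * (g / n ^ 30))) := by gcongr
      _ ≤ _ := by
        rw [← Real.rpow_add (by norm_num), ← Real.rpow_add (by norm_num)]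
        apply Real.rpow_le_rpow_of_exponent_le (by norm_num)
        have d1 := g_div (by omega) hthick (le_refl 2)
        have d2 := g_div (by omega) hthick (by norm_num : 2 ≤ 30)
        have d3 := g_div (by omega) hthick (by norm_num : 2 ≤ 29)
        have d4 := g_div (by omega) hthick (by norm_num : 2 ≤ 50)
        set u : ℝ := (b:ℝ) / n with hu
        have hu0 : 0 ≤ u := by positivity
        have m3 : (1:ℝ) ≤ (m:ℝ) ^ 3 := one_le_pow₀ rm
        have mm3 : (m:ℝ) ≤ (m:ℝ) ^ 3 := le_self_pow₀ rm (by norm_num)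
        have f1 : (m:ℝ) * (129 * m ^ 2 * g / n ^ 2) ≤ 645 * (m ^ 3 * u) := by
          calc (m:ℝ) * (129 * m ^ 2 * g / n ^ 2) = 129 * m ^ 3 * (g / n ^ 2) := by ring
            _ ≤ 129 * m ^ 3 * (5 * u) := by gcongr
            _ = _ := by ring
        have f2 : (m:ℝ) * (258 * m ^ 2 * b / n) = 258 * (m ^ 3 * u) := by rw [hu]; ring
        have f3 : (m:ℝ) * (2 * g / n ^ 50) ≤ 10 * (m ^ 3 * u) := by
          calc (m:ℝ) * (2 * g / n ^ 50) = 2 * m * (g / n ^ 50) := by ring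
            _ ≤ 2 * m ^ 3 * (5 * u) := by gcongr
            _ = _ := by ring
        have f4 : u ≤ m ^ 3 * u := by nlinarith
        have f5 : 1000 * (m ^ 3 * u) ≤ (b:ℝ) / (1000 * m) := by
          rw [hu, le_div_iff₀ (by positivity)]
          have : (10:ℝ) ^ 8 * m ^ 6 ≤ n := by exact_mod_cast hp.2.1
          have m46 : (m:ℝ) ^ 4 ≤ m ^ 6 := pow_le_pow_right₀ rm (by norm_num)
          calc 1000 * ((m:ℝ) ^ 3 * (b / n)) * (1000 * m) = (10 ^ 6 * (m:ℝ) ^ 4) * b / n := by ring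
            _ ≤ (n:ℝ) * b / n := by gcongr; linarith
            _ = (b:ℝ) := by field_simp
        linarith
  · intro A hA hAC hAg hAb
    obtain ⟨T, Ω, Ms, h1, h2, h3, h4, h5, h6, h7, h8⟩ := approx_single hp hn hA hAg hAb hg30 hthick
    refine ⟨recon j T Ω Ms, mem_image.mpr ⟨(T, Ω, Ms), ?_, rfl⟩, h7, h8⟩
    simp only [h𝓛, mem_product, mem_Lst]
    exact ⟨⟨h1.trans hAC, h2⟩, ⟨h3.trans (Uf_mono hAC), h4⟩, h5.trans hAC, h6⟩

lemma fact_le (n : ℕ) : (n.factorial : ℝ) ≤ (2:ℝ) ^ ((n:ℝ) ^ 2) := by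
  have h1 : n.factorial ≤ n ^ n := Nat.factorial_le_pow n
  have h2 : n ^ n ≤ (2 ^ n) ^ n := Nat.pow_le_pow_left (Nat.lt_two_pow_self).le n
  have h3 : (n.factorial : ℝ) ≤ (2 ^ n) ^ n := by exact_mod_cast h1.trans h2
  rw [← pow_mul, ← Real.rpow_natCast] at h3
  convert h3 using 2
  push_cast; ring

lemma weight_sum {ι : Type*} (S : Finset (Finset ι)) (ε q r : ℝ) (hε : 0 ≤ ε)
    (hS : ∀ X ∈ S, (X.card : ℝ) ≤ q) (hc : (S.card : ℝ) ≤ (2:ℝ) ^ r) :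
    ∑ X ∈ S, (2:ℝ) ^ ((1 + ε) * (X.card : ℝ)) ≤ (2:ℝ) ^ (r + (1 + ε) * q) := by
  calc ∑ X ∈ S, (2:ℝ) ^ ((1 + ε) * (X.card : ℝ)) ≤ S.card • (2:ℝ) ^ ((1 + ε) * q) := by
        apply sum_le_card_nsmul
        intro X hX
        apply Real.rpow_le_rpow_of_exponent_le (by norm_num)
        have := hS X hX
        gcongr
    _ ≤ _ := by
        rw [nsmul_eq_mul, Real.rpow_add (by norm_num)]
        gcongr

lemma cont_F {n m j g b : ℕ} (hp : Par n m) (hn : n ≤ 2 * j + 1)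
    {C : Finset (Finset (Fin n))} (hCg : C.card ≤ g * n ^ 20)
    (hg30 : n ^ 30 ≤ g) (hthick : g ≤ 5 * n * b) (F : Finset (Finset (Fin n))) :
    ∃ 𝒳 : Finset (Finset (Finset (Fin n))),
      ∑ X ∈ 𝒳, (2:ℝ) ^ ((1 + 1 / (n:ℝ) ^ 3) * (X.card : ℝ)) ≤ (2:ℝ) ^ ((g:ℝ) - b / (150 * m)) ∧
      ∀ A : Finset (Finset (Fin n)), (∀ x ∈ A, x.card = j + 1) → ∂ A ⊆ C → (∂ A).card = g →
        (Kf j (∂ A)).card + b = g → F ⊆ ∂ A →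
        (∀ c ∈ ∂ A, c ∉ F → 16 * m * deg (Kf j (∂ A)) c < j + 1) →
        ∃ X ∈ 𝒳, A ⊆ X ∧ ∀ x ∈ X, x.card = j + 1 := by
  have hnl := hp.n_large
  have hm1 := hp.2.2
  have rn : (10:ℝ) ^ 8 ≤ n := by exact_mod_cast hnl
  have rm : (1:ℝ) ≤ m := by exact_mod_cast hm1
  have rn0 : (0:ℝ) < n := by linarith
  by_cases hFg : g < F.card
  · refine ⟨∅, by simp; positivity, ?_⟩
    intro A _ _ h1 _ h2
    have := card_le_card h2
    omega
  push Not at hFg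
  have rFg : (F.card : ℝ) ≤ g := by exact_mod_cast hFg
  set ℓ : ℝ := (g:ℝ) - F.card with hℓ
  have hℓ0 : 0 ≤ ℓ := by linarith
  have d2 := g_div (by omega) hthick (by norm_num : 2 ≤ 30)
  have d3 := g_div (by omega) hthick (by norm_num : 2 ≤ 3)
  set ε : ℝ := 1 / (n:ℝ) ^ 3 with hε
  have hε0 : 0 ≤ ε := by positivity
  have hεg : ε * g ≤ 5 * (b / n) := by
    calc ε * g = (g:ℝ) / n ^ 3 := by rw [hε]; ring
      _ ≤ _ := d3
  have hbn : (b:ℝ) / n ≤ 1 / 10 ^ 8 * (b / m) := by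
    have h1 : (10:ℝ) ^ 8 * m ^ 6 ≤ n := by exact_mod_cast hp.2.1
    have h2 : (m:ℝ) ≤ (m:ℝ) ^ 6 := le_self_pow₀ rm (by norm_num)
    calc (b:ℝ) / n ≤ b / (10 ^ 8 * m) := by gcongr; linarith
      _ = _ := by field_simp
  have hKC : ((Kf j C).card : ℝ) ≤ (g:ℝ) / n ^ 30 * 2 ^ m :=
    C_le hp (by norm_num) ((Kf_card_le hn C).trans hCg)
  have hCC : (C.card : ℝ) ≤ (g:ℝ) / n ^ 30 * 2 ^ m := C_le hp (by norm_num) hCg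
  have hbm : (b:ℝ) / (150 * m) = 1 / 150 * (b / m) := by field_simp
  rw [hbm]
  have hbb : (b:ℝ) / m ≤ b := div_le_self (by positivity) rm
  have hn2 : (n:ℝ) ^ 2 ≤ b / n := by
    have h1 : (g:ℝ) ≤ 5 * n * b := by exact_mod_cast hthick
    have h2 : (n:ℝ) ^ 30 ≤ g := by exact_mod_cast hg30
    rw [le_div_iff₀ rn0]
    have h3 : (n:ℝ) ^ 29 ≤ 5 * b := by
      have : (n:ℝ) ^ 29 * n ≤ 5 * b * n := by
        calc (n:ℝ) ^ 29 * n = n ^ 30 := by ring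
          _ ≤ _ := by linarith
      exact le_of_mul_le_mul_right this rn0
    have h4 : 5 * (n:ℝ) ^ 3 ≤ n ^ 29 := by
      calc 5 * (n:ℝ) ^ 3 ≤ n * n ^ 3 := by gcongr; linarith
        _ = (n:ℝ) ^ 4 := by ring
        _ ≤ (n:ℝ) ^ 29 := pow_le_pow_right₀ (by linarith) (by norm_num)
    nlinarith
  by_cases hcase : (b:ℝ) / m ≤ 16 * ℓ
  · -- case 1
    obtain ⟨Ψ, hΨ1, hΨ2, hΨ3⟩ := averaging (n := n) (j := j) hn
    set f : (Finset (Fin n) → Finset (Fin n)) × Finset (Finset (Fin n)) → Finset (Finset (Fin n)) :=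
      fun p => univ.filter (fun x => x.card = j + 1 ∧ p.1 x ∈ F) ∪ p.2 with hf
    set P := Ψ ×ˢ Lst (Kf j C) (ℓ / (16 * m)) with hP
    refine ⟨P.image f, ?_, ?_⟩
    · have hw := weight_sum (P.image f) ε (F.card + ℓ / (16 * m))
        ((n:ℝ) ^ 2 + (m * (ℓ / (16 * m)) + 2 * (g / n ^ 30))) hε0 ?_ ?_
      · refine hw.trans ?_
        apply Real.rpow_le_rpow_of_exponent_le (by norm_num)
        have e1 : (m:ℝ) * (ℓ / (16 * m)) = ℓ / 16 := by field_simp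
        have e2 : ℓ / (16 * m) ≤ ℓ / 16 := by
          apply div_le_div_of_nonneg_left hℓ0 (by norm_num); linarith
        have e3 : (F.card : ℝ) = g - ℓ := by rw [hℓ]; ring
        rw [e1, e3]
        have e4 : (1 + ε) * ((g:ℝ) - ℓ + ℓ / (16 * m)) ≤ (1 + ε) * (g - ℓ + ℓ / 16) := by gcongr
        have e5 : 0 ≤ ε * ℓ := by positivity
        nlinarith
      · intro X hX
        obtain ⟨p, hp1, rfl⟩ := mem_image.mp hX
        rw [hP, mem_product, mem_Lst] at hp1
        have h1 : (univ.filter (fun x => x.card = j + 1 ∧ p.1 x ∈ F)).card ≤ F.card := by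
          apply card_le_card_of_injOn p.1
          · intro x hx
            simp only [coe_filter, mem_univ, true_and, Set.mem_ofPred_eq] at hx
            exact hx.2
          · intro x hx y hy hxy
            simp only [coe_filter, mem_univ, true_and, Set.mem_ofPred_eq] at hx hy
            exact (hΨ2 p.1 hp1.1).1 x y hx.1 hy.1 hxy
        have h2 : (f p).card ≤ F.card + p.2.card := (card_union_le _ _).trans (by omega)
        have h3 : ((f p).card : ℝ) ≤ F.card + p.2.card := by exact_mod_cast h2
        linarith [hp1.2.2]
      · have h1 : (((P.image f).card : ℕ) : ℝ) ≤ P.card := by exact_mod_cast card_image_le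
        refine h1.trans ?_
        rw [hP, card_product, Real.rpow_add (by norm_num)]
        push_cast
        have h2 : (Ψ.card : ℝ) ≤ n.factorial := by exact_mod_cast hΨ1
        have h3 := Lst_card (Kf j C) (ℓ / (16 * m)) (g / n ^ 30) m hKC
        exact mul_le_mul (h2.trans (fact_le n)) h3 (by positivity) (by positivity)
    · intro A hA hAC hAg hAb hFA hlow
      obtain ⟨ψ, hψ, hψ2⟩ := hΨ3 A (∂ A \ F) hA
      refine ⟨f (ψ, A.filter (fun x => ψ x ∈ ∂ A \ F)), mem_image.mpr ⟨_, ?_, rfl⟩, ?_, ?_⟩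
      · rw [hP, mem_product, mem_Lst]
        refine ⟨hψ, (filter_subset _ _).trans (subset_Kf hA hAC), ?_⟩
        have hs : ∀ c ∈ ∂ A \ F, 16 * m * (A.filter (fun x => c ⊆ x)).card ≤ j + 1 := by
          intro c hc
          rw [mem_sdiff] at hc
          have h1 := hlow c hc.1 hc.2
          have h2 : (A.filter (fun x => c ⊆ x)).card ≤ deg (Kf j (∂ A)) c :=
            card_le_card (filter_subset_filter _ (subset_Kf hA (le_refl _)))
          have h3 := Nat.mul_le_mul_left (16 * m) h2
          omega
        have hs2 := sum_le_sum hs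
        rw [← mul_sum, sum_const, smul_eq_mul, card_sdiff_of_subset hFA, hAg] at hs2
        have h5 : 16 * m * ((j + 1) * (A.filter (fun x => ψ x ∈ ∂ A \ F)).card)
            ≤ (g - F.card) * (j + 1) := (Nat.mul_le_mul_left _ hψ2).trans hs2
        have h6 : (16 * m * (A.filter (fun x => ψ x ∈ ∂ A \ F)).card) * (j + 1)
            ≤ (g - F.card) * (j + 1) := by
          refine le_trans (le_of_eq (by ring)) h5
        have h7 := Nat.le_of_mul_le_mul_right h6 (by omega)
        have h8 : 16 * (m:ℝ) * (A.filter (fun x => ψ x ∈ ∂ A \ F)).card ≤ ℓ := by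
          rw [hℓ, ← Nat.cast_sub hFg]; exact_mod_cast h7
        rw [le_div_iff₀ (by positivity)]
        linarith
      · intro x hx
        simp only [hf, mem_union, mem_filter, mem_univ, true_and, mem_sdiff]
        have h1 := (hΨ2 ψ hψ).2 x (hA x hx)
        have h2 : ψ x ∈ ∂ A := (mem_shadow' hA).mpr ⟨x, hx, h1.1, h1.2⟩
        have h3 := hA x hx
        tauto
      · intro x hx
        simp only [hf, mem_union, mem_filter, mem_univ, true_and] at hx
        rcases hx with h | h
        · exact h.1
        · exact hA x h.1
  · push Not at hcase
    set 𝒳 := ((Lst C ℓ).image (fun R => Kf j (F ∪ R))).filter (fun X => X.card + b ≤ g) with h𝒳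
    refine ⟨𝒳, ?_, ?_⟩
    · have hw := weight_sum 𝒳 ε (g - b) (m * ℓ + 2 * (g / n ^ 30)) hε0 ?_ ?_
      · refine hw.trans ?_
        apply Real.rpow_le_rpow_of_exponent_le (by norm_num)
        have e1 : (m:ℝ) * ℓ ≤ b / 16 := by
          rw [lt_div_iff₀ (by positivity)] at hcase
          linarith
        have e5 : 0 ≤ ε * b := by positivity
        nlinarith
      · intro X hX
        have := (mem_filter.mp hX).2
        have h : (X.card : ℝ) + b ≤ g := by exact_mod_cast this
        linarith
      · have h1 : 𝒳.card ≤ (Lst C ℓ).card := (card_le_card (filter_subset _ _)).trans card_image_le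
        have h2 : (𝒳.card : ℝ) ≤ (Lst C ℓ).card := by exact_mod_cast h1
        exact h2.trans (Lst_card C ℓ (g / n ^ 30) m hCC)
    · intro A hA hAC hAg hAb hFA hlow
      have hU : F ∪ (∂ A \ F) = ∂ A := union_sdiff_of_subset hFA
      refine ⟨Kf j (∂ A), ?_, subset_Kf hA (le_refl _), Kf_card⟩
      rw [h𝒳, mem_filter]
      refine ⟨mem_image.mpr ⟨∂ A \ F, ?_, by rw [hU]⟩, by omega⟩
      rw [mem_Lst]
      refine ⟨sdiff_subset.trans hAC, ?_⟩
      rw [card_sdiff_of_subset hFA, hAg, Nat.cast_sub hFg]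

lemma sum_biUnion_le {ι α : Type*} [DecidableEq ι] [DecidableEq α] (S : Finset ι) (f : ι → Finset α) (w : α → ℝ)
    (hw : ∀ a, 0 ≤ w a) : ∑ a ∈ S.biUnion f, w a ≤ ∑ i ∈ S, ∑ a ∈ f i, w a := by
  induction S using Finset.induction_on with
  | empty => simp
  | insert i S hi ih =>
    rw [biUnion_insert, sum_insert hi]
    have : ∑ a ∈ f i ∪ S.biUnion f, w a ≤ ∑ a ∈ f i, w a + ∑ a ∈ S.biUnion f, w a := by
      rw [← sum_union_inter]
      have : 0 ≤ ∑ a ∈ f i ∩ S.biUnion f, w a := sum_nonneg fun a _ => hw a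
      linarith
    linarith

lemma containers {n m j g b : ℕ} (hp : Par n m) (hn : n ≤ 2 * j + 1)
    {C : Finset (Finset (Fin n))} (hC : ∀ c ∈ C, c.card = j) (hCg : C.card ≤ g * n ^ 20)
    (hg30 : n ^ 30 ≤ g) (hthick : g ≤ 5 * n * b) :
    ∃ 𝒳 : Finset (Finset (Finset (Fin n))),
      ∑ X ∈ 𝒳, (2:ℝ) ^ ((1 + 1 / (n:ℝ) ^ 3) * (X.card : ℝ)) ≤ (2:ℝ) ^ ((g:ℝ) - b / (200 * m)) ∧
      (∀ X ∈ 𝒳, ∀ x ∈ X, x.card = j + 1) ∧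
      ∀ A : Finset (Finset (Fin n)), (∀ x ∈ A, x.card = j + 1) → ∂ A ⊆ C → (∂ A).card = g →
        (Kf j (∂ A)).card + b = g → ∃ X ∈ 𝒳, A ⊆ X := by
  have hm1 := hp.2.2
  have rm : (1:ℝ) ≤ m := by exact_mod_cast hm1
  obtain ⟨𝓕, h1, h2⟩ := approx hp hn hC hCg hg30 hthick
  choose 𝒳 h3 h4 using cont_F hp hn hCg hg30 hthick
  refine ⟨(𝓕.biUnion 𝒳).filter (fun X => ∀ x ∈ X, x.card = j + 1), ?_, ?_, ?_⟩
  · calc _ ≤ ∑ X ∈ 𝓕.biUnion 𝒳, (2:ℝ) ^ ((1 + 1 / (n:ℝ) ^ 3) * (X.card : ℝ)) :=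
          sum_le_sum_of_subset_of_nonneg (filter_subset _ _) (fun _ _ _ => by positivity)
      _ ≤ ∑ F ∈ 𝓕, ∑ X ∈ 𝒳 F, (2:ℝ) ^ ((1 + 1 / (n:ℝ) ^ 3) * (X.card : ℝ)) :=
          sum_biUnion_le _ _ _ (fun _ => by positivity)
      _ ≤ 𝓕.card • (2:ℝ) ^ ((g:ℝ) - b / (150 * m)) := sum_le_card_nsmul _ _ _ (fun F _ => h3 F)
      _ ≤ (2:ℝ) ^ ((b:ℝ) / (1000 * m)) * (2:ℝ) ^ ((g:ℝ) - b / (150 * m)) := by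
          rw [nsmul_eq_mul]; gcongr
      _ ≤ _ := by
          rw [← Real.rpow_add (by norm_num)]
          apply Real.rpow_le_rpow_of_exponent_le (by norm_num)
          have a1 : (b:ℝ) / (1000 * m) = 1 / 1000 * (b / m) := by field_simp
          have a2 : (b:ℝ) / (150 * m) = 1 / 150 * (b / m) := by field_simp
          have a3 : (b:ℝ) / (200 * m) = 1 / 200 * (b / m) := by field_simp
          have a4 : 0 ≤ (b:ℝ) / m := by positivity
          rw [a1, a2, a3]; linarith
  · intro X hX
    exact (mem_filter.mp hX).2
  · intro A hA hAC hAg hAb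
    obtain ⟨F, hF, hF1, hF2⟩ := h2 A hA hAC hAg hAb
    obtain ⟨X, hX, hX1, hX2⟩ := h4 F A hA hAC hAg hAb hF1 hF2
    exact ⟨X, mem_filter.mpr ⟨mem_biUnion.mpr ⟨F, hF, hX⟩, hX2⟩, hX1⟩

end ShellAux

namespace ShellAux
open Finset
open scoped FinsetFamily

def IsUF {n : ℕ} (j : ℕ) (V : Finset (Finset (Fin n))) : Prop :=
  ∀ x ∈ V, j ≤ x.card ∧ ∀ y, y ⊆ x → j ≤ y.card → y ∈ V

def UF (n j : ℕ) : Finset (Finset (Finset (Fin n))) := univ.filter (IsUF j)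

lemma mem_UF {n j : ℕ} {V : Finset (Finset (Fin n))} : V ∈ UF n j ↔ IsUF j V := by simp [UF]

def sl {n : ℕ} (V : Finset (Finset (Fin n))) (r : ℕ) : Finset (Finset (Fin n)) :=
  V.filter (fun x => x.card = r)

lemma mem_sl {n r : ℕ} {V : Finset (Finset (Fin n))} {x : Finset (Fin n)} :
    x ∈ sl V r ↔ x ∈ V ∧ x.card = r := by simp [sl]

lemma sl_card {n r : ℕ} {V : Finset (Finset (Fin n))} : ∀ x ∈ sl V r, x.card = r :=
  fun _ hx => (mem_sl.mp hx).2

def up {n : ℕ} (j : ℕ) (V : Finset (Finset (Fin n))) : Finset (Finset (Fin n)) :=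
  V.filter (fun x => j ≤ x.card)

lemma mem_up {n r : ℕ} {V : Finset (Finset (Fin n))} {x : Finset (Fin n)} :
    x ∈ up r V ↔ x ∈ V ∧ r ≤ x.card := by simp [up]

lemma up_UF {n i j : ℕ} (hij : i ≤ j) {V : Finset (Finset (Fin n))} (h : IsUF i V) : IsUF j (up j V) := by
  intro x hx
  rw [mem_up] at hx
  refine ⟨hx.2, fun y hy hyj => mem_up.mpr ⟨(h x hx.1).2 y hy (by omega), hyj⟩⟩

lemma sl_up {n i j : ℕ} (hij : i ≤ j) (V : Finset (Finset (Fin n))) : sl (up i V) j = sl V j := by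
  ext x; rw [mem_sl, mem_sl, mem_up]
  constructor
  · rintro ⟨⟨a, b⟩, c⟩; exact ⟨a, c⟩
  · rintro ⟨a, b⟩; exact ⟨⟨a, by omega⟩, b⟩

lemma shadow_sl_subset {n i j : ℕ} (hij : i ≤ j) {V : Finset (Finset (Fin n))} (h : IsUF i V) :
    ∂ (sl V (j + 1)) ⊆ sl V j := by
  intro c hc
  obtain ⟨x, hx, h1, h2⟩ := (mem_shadow' sl_card).mp hc
  rw [mem_sl] at *
  exact ⟨(h x hx.1).2 c h1 (by omega), h2⟩

lemma decomp {n j : ℕ} (C : Finset (Finset (Fin n))) (Q : Finset (Finset (Fin n)) → Prop) :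
    (((UF n j).filter (fun V => sl V j ⊆ C ∧ Q (up (j + 1) V))).card : ℝ) ≤
      ∑ W ∈ (UF n (j + 1)).filter (fun W => ∂ (sl W (j + 1)) ⊆ C ∧ Q W),
        (2:ℝ) ^ ((C.card : ℝ) - ((∂ (sl W (j + 1))).card : ℝ)) := by
  set S := (UF n j).filter (fun V => sl V j ⊆ C ∧ Q (up (j + 1) V)) with hS
  set R := (UF n (j + 1)).filter (fun W => ∂ (sl W (j + 1)) ⊆ C ∧ Q W) with hR
  have hmaps : ∀ V ∈ S, up (j + 1) V ∈ R := by
    intro V hV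
    obtain ⟨hV1, hV2, hV3⟩ := mem_filter.mp hV
    rw [mem_UF] at hV1
    refine mem_filter.mpr ⟨mem_UF.mpr (up_UF (by omega) hV1), ?_, hV3⟩
    rw [sl_up (le_refl _)]
    exact (shadow_sl_subset (le_refl _) hV1).trans hV2
  have h1 := card_eq_sum_card_fiberwise (s := S) (t := R) (f := up (j + 1)) hmaps
  rw [h1]
  push_cast
  apply sum_le_sum
  intro W hW
  obtain ⟨hW1, hW2, hW3⟩ := mem_filter.mp hW
  have h2 : (S.filter (fun V => up (j + 1) V = W)).card ≤ (C \ ∂ (sl W (j + 1))).powerset.card := by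
    apply card_le_card_of_injOn (fun V => sl V j \ ∂ (sl W (j + 1)))
    · intro V hV
      simp only [coe_filter, Set.mem_ofPred_eq, mem_filter, hS] at hV
      simp only [coe_powerset, Set.mem_preimage, Set.mem_powerset_iff, coe_subset]
      exact sdiff_subset_sdiff hV.1.2.1 (le_refl _)
    · intro V hV V' hV' heq
      simp only [coe_filter, Set.mem_ofPred_eq, mem_filter, hS] at hV hV'
      have key : ∀ V, IsUF j V → up (j + 1) V = W →
          V = (sl V j \ ∂ (sl W (j + 1))) ∪ ∂ (sl W (j + 1)) ∪ W := by
        intro V hV hVW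
        have hsub : ∂ (sl W (j + 1)) ⊆ sl V j := by
          rw [← hVW, sl_up (le_refl _)]
          exact shadow_sl_subset (le_refl _) hV
        rw [sdiff_union_of_subset hsub, ← hVW]
        ext x
        rw [mem_union, mem_sl, mem_up]
        constructor
        · intro hx
          have := (hV x hx).1
          by_cases h : x.card = j
          · exact Or.inl ⟨hx, h⟩
          · exact Or.inr ⟨hx, by omega⟩
        · rintro (h | h) <;> exact h.1
      rw [key V (mem_UF.mp hV.1.1) hV.2, key V' (mem_UF.mp hV'.1.1) hV'.2]
      simp only at heq
      rw [heq]
  rw [card_powerset, card_sdiff_of_subset hW2] at h2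
  have h3 : (((S.filter (fun V => up (j + 1) V = W)).card : ℕ) : ℝ)
      ≤ (2:ℝ) ^ (C.card - (∂ (sl W (j + 1))).card) := by exact_mod_cast h2
  rwa [← Real.rpow_natCast, Nat.cast_sub (card_le_card hW2)] at h3

def Phi {n : ℕ} (j : ℕ) (C : Finset (Finset (Fin n))) : Finset (Finset (Finset (Fin n))) :=
  (UF n j).filter (fun V => sl V j ⊆ C)

lemma UF_top {n j : ℕ} (hj : n < j) (C : Finset (Finset (Fin n))) : (Phi j C).card ≤ 1 := by
  have : Phi j C ⊆ {∅} := by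
    intro V hV
    rw [mem_singleton]
    have h := mem_UF.mp (mem_filter.mp hV).1
    rw [eq_empty_iff_forall_notMem]
    intro x hx
    have h1 := (h x hx).1
    have h2 := card_le_univ x
    rw [Fintype.card_fin] at h2
    omega
  exact (card_le_card this).trans (by simp)

lemma Phi_step {n j : ℕ} (C : Finset (Finset (Fin n))) :
    ((Phi j C).card : ℝ) ≤ (2:ℝ) ^ (C.card : ℝ) * (Phi (j + 1) (Kf j C)).card := by
  have h := decomp (j := j) C (fun _ => True)
  simp only [and_true] at h
  refine le_trans h ?_
  calc _ ≤ ∑ W ∈ (UF n (j + 1)).filter (fun W => ∂ (sl W (j + 1)) ⊆ C), (2:ℝ) ^ (C.card : ℝ) := by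
        apply sum_le_sum
        intro W _
        apply Real.rpow_le_rpow_of_exponent_le (by norm_num)
        have : (0:ℝ) ≤ (∂ (sl W (j + 1))).card := by positivity
        linarith
    _ = (((UF n (j + 1)).filter (fun W => ∂ (sl W (j + 1)) ⊆ C)).card : ℝ) * (2:ℝ) ^ (C.card : ℝ) := by
        rw [sum_const, nsmul_eq_mul]
    _ ≤ ((Phi (j + 1) (Kf j C)).card : ℝ) * (2:ℝ) ^ (C.card : ℝ) := by
        gcongr
        intro W hW
        obtain ⟨h1, h2⟩ := mem_filter.mp hW
        exact mem_filter.mpr ⟨h1, subset_Kf sl_card h2⟩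
    _ = _ := mul_comm _ _

lemma Phi_triv {n : ℕ} (k : ℕ) : ∀ j, j + k = n + 1 → n ≤ 2 * j + 1 → ∀ C : Finset (Finset (Fin n)),
    ((Phi j C).card : ℝ) ≤ (2:ℝ) ^ ((k:ℝ) * C.card) := by
  induction k with
  | zero =>
    intro j hj _ C
    have := UF_top (n := n) (j := j) (by omega) C
    have h : ((Phi j C).card : ℝ) ≤ 1 := by exact_mod_cast this
    simpa using h
  | succ k ih =>
    intro j hj hn C
    refine (Phi_step C).trans ?_
    have h1 := ih (j + 1) (by omega) (by omega) (Kf j C)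
    have h2 : ((Kf j C).card : ℝ) ≤ C.card := by exact_mod_cast Kf_card_le hn C
    calc _ ≤ (2:ℝ) ^ (C.card : ℝ) * (2:ℝ) ^ ((k:ℝ) * C.card) := by
          gcongr
          refine h1.trans ?_
          apply Real.rpow_le_rpow_of_exponent_le (by norm_num)
          gcongr
      _ = _ := by
          rw [← Real.rpow_add (by norm_num)]
          congr 1; push_cast; ring

def Thick {n : ℕ} (j : ℕ) (A : Finset (Finset (Fin n))) : Prop :=
  (∂ A).card ≤ 5 * n * ((∂ A).card - (Kf j (∂ A)).card)

lemma auto_thick {n j : ℕ} (hn : n ≤ 2 * j) {A : Finset (Finset (Fin n))}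
    (hA : ∀ x ∈ A, x.card = j + 1) : Thick j A := by
  unfold Thick
  rcases (∂ A).eq_empty_or_nonempty with h | h
  · rw [h]; simp
  have hjn : j + 1 ≤ n := by
    obtain ⟨c, hc⟩ := h
    obtain ⟨x, hx, _⟩ := (mem_shadow' hA).mp hc
    rw [← hA x hx]
    simpa using card_le_univ x
  set g := (∂ A).card with hg
  have h1 := lym (A := Kf j (∂ A)) Kf_card
  have h2 : (∂ (Kf j (∂ A))).card ≤ g := card_le_card (shadow_Kf _)
  set a := (Kf j (∂ A)).card
  have h3 : a * (j + 1) ≤ g * j :=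
    h1.trans (Nat.mul_le_mul h2 (by omega))
  have h4 : a ≤ g := by nlinarith
  obtain ⟨b, hb⟩ := Nat.exists_eq_add_of_le h4
  rw [hb, Nat.add_sub_cancel_left]
  rw [hb] at h3
  nlinarith

def Hyp (n j : ℕ) (E : ℝ) : Prop := ∀ C : Finset (Finset (Fin n)), (∀ c ∈ C, c.card = j) →
  ((Phi j C).card : ℝ) ≤ (2:ℝ) ^ ((1 + 1 / (n:ℝ) ^ 3) * (C.card : ℝ) + E)

lemma large_pair {n m j g b : ℕ} {E : ℝ} (hp : Par n m) (hn : n ≤ 2 * j + 1) (hH : Hyp n (j + 1) E)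
    {C : Finset (Finset (Fin n))} (hC : ∀ c ∈ C, c.card = j) (hCg : C.card ≤ g * n ^ 20)
    (hg30 : n ^ 30 ≤ g) (hthick : g ≤ 5 * n * b) :
    (((UF n (j + 1)).filter (fun W => ∂ (sl W (j + 1)) ⊆ C ∧ (∂ (sl W (j + 1))).card = g ∧
      (Kf j (∂ (sl W (j + 1)))).card + b = g)).card : ℝ) ≤ (2:ℝ) ^ (E + ((g:ℝ) - b / (200 * m))) := by
  obtain ⟨𝒳, h1, h2, h3⟩ := containers hp hn hC hCg hg30 hthick
  have hsub : (UF n (j + 1)).filter (fun W => ∂ (sl W (j + 1)) ⊆ C ∧ (∂ (sl W (j + 1))).card = g ∧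
      (Kf j (∂ (sl W (j + 1)))).card + b = g) ⊆ 𝒳.biUnion (fun X => Phi (j + 1) X) := by
    intro W hW
    obtain ⟨hW1, hW2, hW3, hW4⟩ := mem_filter.mp hW
    obtain ⟨X, hX, hX2⟩ := h3 _ sl_card hW2 hW3 hW4
    exact mem_biUnion.mpr ⟨X, hX, mem_filter.mpr ⟨hW1, hX2⟩⟩
  have h4 := (card_le_card hsub).trans card_biUnion_le
  have h5 : (((UF n (j + 1)).filter (fun W => ∂ (sl W (j + 1)) ⊆ C ∧ (∂ (sl W (j + 1))).card = g ∧
      (Kf j (∂ (sl W (j + 1)))).card + b = g)).card : ℝ) ≤ ∑ X ∈ 𝒳, ((Phi (j + 1) X).card : ℝ) := by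
    exact_mod_cast h4
  refine h5.trans ?_
  calc _ ≤ ∑ X ∈ 𝒳, (2:ℝ) ^ E * (2:ℝ) ^ ((1 + 1 / (n:ℝ) ^ 3) * (X.card : ℝ)) := by
        apply sum_le_sum
        intro X hX
        refine (hH X (h2 X hX)).trans (le_of_eq ?_)
        rw [add_comm, Real.rpow_add (by norm_num)]
    _ = (2:ℝ) ^ E * ∑ X ∈ 𝒳, (2:ℝ) ^ ((1 + 1 / (n:ℝ) ^ 3) * (X.card : ℝ)) := by rw [mul_sum]
    _ ≤ (2:ℝ) ^ E * (2:ℝ) ^ ((g:ℝ) - b / (200 * m)) := by gcongr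
    _ = _ := by rw [← Real.rpow_add (by norm_num)]

lemma sum_fiber2 {α : Type*} (S : Finset α) (f g : α → ℕ) (M : ℕ) (w : α → ℝ) (q : ℝ)
    (hf : ∀ a ∈ S, f a ≤ M) (hg : ∀ a ∈ S, g a ≤ M)
    (h : ∀ u v, ∑ a ∈ S.filter (fun a => f a = u ∧ g a = v), w a ≤ q) :
    ∑ a ∈ S, w a ≤ ((M:ℝ) + 1) ^ 2 * q := by
  have h1 := sum_fiberwise_of_maps_to (s := S) (t := range (M + 1) ×ˢ range (M + 1))
    (g := fun a => (f a, g a)) (fun a ha => by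
      simp only [mem_product, mem_range]
      exact ⟨Nat.lt_succ_of_le (hf a ha), Nat.lt_succ_of_le (hg a ha)⟩) w
  rw [← h1]
  calc _ ≤ (range (M + 1) ×ˢ range (M + 1)).card • q := by
        apply sum_le_card_nsmul
        intro p _
        refine le_trans (le_of_eq ?_) (h p.1 p.2)
        apply sum_congr _ (fun _ _ => rfl)
        ext a; simp only [mem_filter, Prod.ext_iff]
    _ = _ := by
        rw [nsmul_eq_mul, card_product, card_range]; push_cast; ring

lemma fam_card_le {n : ℕ} (C : Finset (Finset (Fin n))) : C.card ≤ 2 ^ n := by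
  have := card_le_univ C
  simpa using this

lemma large_sum {n m j : ℕ} {E g0 : ℝ} (hp : Par n m) (hn : n ≤ 2 * j + 1) (hH : Hyp n (j + 1) E)
    {C : Finset (Finset (Fin n))} (hC : ∀ c ∈ C, c.card = j) (hCg : (C.card : ℝ) ≤ g0 * n ^ 20)
    (hg30 : (n:ℝ) ^ 30 ≤ g0) :
    (((UF n j).filter (fun V => sl V j ⊆ C ∧ g0 ≤ (∂ (sl V (j + 1))).card ∧
      Thick j (sl V (j + 1)))).card : ℝ) ≤ (2:ℝ) ^ ((C.card:ℝ) + E - g0 / n ^ 3) := by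
  have hnl := hp.n_large
  have hm1 := hp.2.2
  have rn : (10:ℝ) ^ 8 ≤ n := by exact_mod_cast hnl
  have rm : (1:ℝ) ≤ m := by exact_mod_cast hm1
  have rn0 : (0:ℝ) < n := by linarith
  have h := decomp (j := j) C (fun W => g0 ≤ (∂ (sl W (j + 1))).card ∧ Thick j (sl W (j + 1)))
  simp only [sl_up (le_refl _)] at h
  refine le_trans (le_of_eq ?_) (h.trans ?_)
  · congr!
  set S := (UF n (j + 1)).filter (fun W => ∂ (sl W (j + 1)) ⊆ C ∧
    g0 ≤ (∂ (sl W (j + 1))).card ∧ Thick j (sl W (j + 1))) with hS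
  have hs := sum_fiber2 S (fun W => (∂ (sl W (j + 1))).card)
    (fun W => (∂ (sl W (j + 1))).card - (Kf j (∂ (sl W (j + 1)))).card) C.card
    (fun W => (2:ℝ) ^ ((C.card : ℝ) - ((∂ (sl W (j + 1))).card : ℝ)))
    ((2:ℝ) ^ ((C.card : ℝ) + E - g0 / (1000 * n * m))) ?_ ?_ ?_
  · refine le_trans (le_of_eq ?_) (hs.trans ?_)
    · exact sum_congr (by ext W; simp only [hS, mem_filter]) (fun _ _ => rfl)
    have hc : (C.card : ℝ) ≤ 2 ^ n := by exact_mod_cast fam_card_le C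
    have h1 : ((C.card : ℝ) + 1) ^ 2 ≤ (2:ℝ) ^ (2 * ((n:ℝ) + 1)) := by
      have : (C.card : ℝ) + 1 ≤ 2 ^ (n + 1) := by
        have : (1:ℝ) ≤ 2 ^ n := one_le_pow₀ (by norm_num)
        rw [pow_succ]; linarith
      calc ((C.card : ℝ) + 1) ^ 2 ≤ (2 ^ (n + 1)) ^ 2 := by gcongr
        _ = _ := by
          rw [← pow_mul, ← Real.rpow_natCast]; congr 1; push_cast; ring
    calc _ ≤ (2:ℝ) ^ (2 * ((n:ℝ) + 1)) * (2:ℝ) ^ ((C.card : ℝ) + E - g0 / (1000 * n * m)) := by gcongr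
      _ ≤ _ := by
        rw [← Real.rpow_add (by norm_num)]
        apply Real.rpow_le_rpow_of_exponent_le (by norm_num)
        have hg0 : 0 < g0 := lt_of_lt_of_le (by positivity) hg30
        have a1 : 2 * (g0 / n ^ 2) ≤ g0 / (1000 * n * m) := by
          have h6 : (10:ℝ) ^ 8 * m ^ 6 ≤ n := by exact_mod_cast hp.2.1
          have h7 : (m:ℝ) ≤ (m:ℝ) ^ 6 := le_self_pow₀ rm (by norm_num)
          have h8 : 2 * (1000 * (m:ℝ)) ≤ n := by linarith
          rw [le_div_iff₀ (by positivity)]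
          calc 2 * (g0 / n ^ 2) * (1000 * n * m) = (2 * (1000 * (m:ℝ))) * g0 / n := by field_simp
            _ ≤ n * g0 / n := by gcongr
            _ = g0 := by field_simp
        have a2 : g0 / n ^ 3 ≤ g0 / n ^ 2 :=
          div_le_div_of_nonneg_left hg0.le (by positivity) (pow_le_pow_right₀ (by linarith) (by norm_num))
        have a3 : 2 * ((n:ℝ) + 1) ≤ g0 / n ^ 2 := by
          rw [le_div_iff₀ (by positivity)]
          calc 2 * ((n:ℝ) + 1) * n ^ 2 ≤ (n * n) * n ^ 2 := mul_le_mul_of_nonneg_right (by nlinarith) (by positivity)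
            _ = (n:ℝ) ^ 4 := by ring
            _ ≤ (n:ℝ) ^ 30 := pow_le_pow_right₀ (by linarith) (by norm_num)
            _ ≤ _ := hg30
        linarith
  · intro W hW
    exact card_le_card (mem_filter.mp hW).2.1
  · intro W hW
    exact (Nat.sub_le _ _).trans (card_le_card (mem_filter.mp hW).2.1)
  · intro g b
    rcases (S.filter (fun W => (∂ (sl W (j + 1))).card = g ∧
      (∂ (sl W (j + 1))).card - (Kf j (∂ (sl W (j + 1)))).card = b)).eq_empty_or_nonempty with he | ⟨W, hW⟩
    · rw [he]; simp; positivity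
    simp only [mem_filter, hS] at hW
    obtain ⟨⟨hW1, hW2, hW3, hW4⟩, hW5, hW6⟩ := hW
    unfold Thick at hW4
    rw [hW6, hW5] at hW4
    rw [hW5] at hW3
    have hCg' : C.card ≤ g * n ^ 20 := by
      have : (C.card : ℝ) ≤ g * n ^ 20 := hCg.trans (by gcongr)
      exact_mod_cast this
    have hg30' : n ^ 30 ≤ g := by exact_mod_cast hg30.trans hW3
    have hl := large_pair hp hn hH hC hCg' hg30' hW4
    calc _ ≤ ∑ W ∈ (UF n (j + 1)).filter (fun W => ∂ (sl W (j + 1)) ⊆ C ∧ (∂ (sl W (j + 1))).card = g ∧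
      (Kf j (∂ (sl W (j + 1)))).card + b = g), (2:ℝ) ^ ((C.card : ℝ) - (g : ℝ)) := by
          rw [sum_congr rfl (g := fun _ => (2:ℝ) ^ ((C.card : ℝ) - (g : ℝ)))]
          · apply sum_le_sum_of_subset_of_nonneg
            · intro W hW
              simp only [mem_filter, hS] at hW ⊢
              refine ⟨hW.1.1, hW.1.2.1, hW.2.1, ?_⟩
              have : (Kf j (∂ (sl W (j + 1)))).card ≤ (∂ (sl W (j + 1))).card := Kf_card_le hn _
              omega
            · intros; positivity
          · intro W hW
            rw [(mem_filter.mp hW).2.1]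
      _ = (((UF n (j + 1)).filter (fun W => ∂ (sl W (j + 1)) ⊆ C ∧ (∂ (sl W (j + 1))).card = g ∧
      (Kf j (∂ (sl W (j + 1)))).card + b = g)).card : ℝ) * (2:ℝ) ^ ((C.card : ℝ) - (g : ℝ)) := by
          rw [sum_const, nsmul_eq_mul]
      _ ≤ (2:ℝ) ^ (E + ((g:ℝ) - b / (200 * m))) * (2:ℝ) ^ ((C.card : ℝ) - (g : ℝ)) := by gcongr
      _ ≤ _ := by
          rw [← Real.rpow_add (by norm_num)]
          apply Real.rpow_le_rpow_of_exponent_le (by norm_num)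
          have : g0 / (1000 * n * m) ≤ b / (200 * m) := by
            rw [div_le_div_iff₀ (by positivity) (by positivity)]
            have h9 : (g:ℝ) ≤ 5 * n * b := by exact_mod_cast hW4
            have : g0 * (200 * m) ≤ (5 * n * b) * (200 * m) := by gcongr; linarith
            linarith
          linarith

end ShellAux

namespace ShellAux
open Finset
open scoped FinsetFamily

lemma small_sum {n m j : ℕ} {E g0 : ℝ} (hp : Par n m) (hn : n ≤ 2 * j + 1) (hH : Hyp n (j + 1) E)
    {C : Finset (Finset (Fin n))} :
    (((UF n j).filter (fun V => sl V j ⊆ C ∧ ((∂ (sl V (j + 1))).card : ℝ) < g0)).card : ℝ) ≤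
      (2:ℝ) ^ ((C.card:ℝ) + (m * g0 + 2 * (C.card / n ^ 50)) + (2 * g0 + E)) := by
  have hnl := hp.n_large
  have rn : (10:ℝ) ^ 8 ≤ n := by exact_mod_cast hnl
  have rn0 : (0:ℝ) < n := by linarith
  have h := decomp (j := j) C (fun W => ((∂ (sl W (j + 1))).card : ℝ) < g0)
  simp only [sl_up (le_refl _)] at h
  refine le_trans (le_of_eq ?_) (h.trans ?_)
  · congr!
  set S := (UF n (j + 1)).filter (fun W => ∂ (sl W (j + 1)) ⊆ C ∧
    ((∂ (sl W (j + 1))).card : ℝ) < g0) with hS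
  have hsub : S ⊆ (Lst (Kf j C) g0).biUnion (fun B => Phi (j + 1) B) := by
    intro W hW
    obtain ⟨h1, h2, h3⟩ := mem_filter.mp hW
    refine mem_biUnion.mpr ⟨sl W (j + 1), mem_Lst.mpr ⟨subset_Kf sl_card h2, ?_⟩,
      mem_filter.mpr ⟨h1, le_refl _⟩⟩
    have h4 : ((sl W (j + 1)).card : ℝ) ≤ (∂ (sl W (j + 1))).card := by
      exact_mod_cast card_le_shadow hn sl_card
    linarith
  have hS2 : (S.card : ℝ) ≤ (2:ℝ) ^ (m * g0 + 2 * (C.card / n ^ 50)) * (2:ℝ) ^ (2 * g0 + E) := by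
    have h1 := (card_le_card hsub).trans card_biUnion_le
    have h2 : (S.card : ℝ) ≤ ∑ B ∈ Lst (Kf j C) g0, ((Phi (j + 1) B).card : ℝ) := by exact_mod_cast h1
    refine h2.trans ?_
    have h3 : ∀ B ∈ Lst (Kf j C) g0, ((Phi (j + 1) B).card : ℝ) ≤ (2:ℝ) ^ (2 * g0 + E) := by
      intro B hB
      obtain ⟨hB1, hB2⟩ := mem_Lst.mp hB
      refine (hH B (fun x hx => Kf_card x (hB1 hx))).trans ?_
      apply Real.rpow_le_rpow_of_exponent_le (by norm_num)
      have h5 : 1 / (n:ℝ) ^ 3 ≤ 1 := by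
        rw [div_le_one (by positivity)]
        exact one_le_pow₀ (by linarith)
      have h6 : (1 + 1 / (n:ℝ) ^ 3) * (B.card : ℝ) ≤ 2 * B.card := by gcongr; linarith
      linarith
    refine (sum_le_card_nsmul _ _ _ h3).trans ?_
    rw [nsmul_eq_mul]
    gcongr
    apply Lst_card
    have h7 : ((Kf j C).card : ℝ) ≤ C.card := by exact_mod_cast Kf_card_le hn C
    refine h7.trans ?_
    rw [div_mul_eq_mul_div, le_div_iff₀ (by positivity)]
    gcongr
    exact_mod_cast hp.1
  calc _ ≤ ∑ W ∈ S, (2:ℝ) ^ (C.card : ℝ) := by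
        apply sum_le_sum
        intro W _
        apply Real.rpow_le_rpow_of_exponent_le (by norm_num)
        have : (0:ℝ) ≤ (∂ (sl W (j + 1))).card := by positivity
        linarith
    _ = (S.card : ℝ) * (2:ℝ) ^ (C.card : ℝ) := by rw [sum_const, nsmul_eq_mul]
    _ ≤ ((2:ℝ) ^ (m * g0 + 2 * (C.card / n ^ 50)) * (2:ℝ) ^ (2 * g0 + E)) * (2:ℝ) ^ (C.card : ℝ) := by
        gcongr
    _ = _ := by
        rw [← Real.rpow_add (by norm_num), ← Real.rpow_add (by norm_num)]
        congr 1; ring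

lemma Hyp_all {n m : ℕ} {N : ℝ} (hp : Par n m) (hN : (n:ℝ) ^ 100 ≤ N) (k : ℕ) :
    ∀ j, j + k = n + 1 → n ≤ 2 * j → Hyp n j (N / n ^ 40) := by
  have hnl := hp.n_large
  have rn : (10:ℝ) ^ 8 ≤ n := by exact_mod_cast hnl
  have rn0 : (0:ℝ) < n := by linarith
  have hN0 : 0 < N := lt_of_lt_of_le (by positivity) hN
  have hmn : (m:ℝ) ≤ n := by
    have h1 : (10:ℝ) ^ 8 * m ^ 6 ≤ n := by exact_mod_cast hp.2.1
    have rm : (1:ℝ) ≤ m := by exact_mod_cast hp.2.2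
    have h2 : (m:ℝ) ≤ (m:ℝ) ^ 6 := le_self_pow₀ rm (by norm_num)
    linarith
  induction k with
  | zero =>
    intro j hj _ C _
    have h1 := UF_top (n := n) (j := j) (by omega) C
    have h : ((Phi j C).card : ℝ) ≤ 1 := by exact_mod_cast h1
    refine h.trans (Real.one_le_rpow (by norm_num) (by positivity))
  | succ k ih =>
    intro j hj hn C hC
    have hH := ih (j + 1) (by omega) (by omega)
    by_cases hsm : (C.card : ℝ) * n ^ 41 ≤ N
    · refine (Phi_triv (k + 1) j (by omega) (by omega) C).trans ?_
      apply Real.rpow_le_rpow_of_exponent_le (by norm_num)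
      have h1 : (n:ℝ) * C.card ≤ N / n ^ 40 := by
        rw [le_div_iff₀ (by positivity)]
        refine le_trans (le_of_eq ?_) hsm
        ring
      have h2 : ((k + 1 : ℕ) : ℝ) * C.card ≤ n * C.card := by
        gcongr
        omega
      have h3 : 0 ≤ (1 + 1 / (n:ℝ) ^ 3) * (C.card : ℝ) := by positivity
      linarith
    · push Not at hsm
      set E := N / (n:ℝ) ^ 40 with hE
      set c : ℝ := (C.card : ℝ) with hc
      have hc59 : (n:ℝ) ^ 59 ≤ c := by
        have : (n:ℝ) ^ 59 * n ^ 41 ≤ c * n ^ 41 := by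
          rw [← pow_add]; norm_num; linarith
        exact le_of_mul_le_mul_right this (by positivity)
      have hc0 : 0 < c := lt_of_lt_of_le (by positivity) hc59
      set g0 : ℝ := c / n ^ 20 with hg0
      have hCg : c ≤ g0 * n ^ 20 := by rw [hg0]; field_simp; rfl
      have hg30 : (n:ℝ) ^ 30 ≤ g0 := by
        rw [hg0, le_div_iff₀ (by positivity), ← pow_add]
        refine le_trans ?_ hc59
        exact pow_le_pow_right₀ (by linarith) (by norm_num)
      have hl := large_sum (E := E) (g0 := g0) hp (by omega : n ≤ 2 * j + 1) hH hC hCg hg30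
      have hs := small_sum (E := E) (g0 := g0) (C := C) hp (by omega : n ≤ 2 * j + 1) hH
      have hcov : (Phi j C) ⊆ ((UF n j).filter (fun V => sl V j ⊆ C ∧ ((∂ (sl V (j + 1))).card : ℝ) < g0)) ∪
          ((UF n j).filter (fun V => sl V j ⊆ C ∧ g0 ≤ (∂ (sl V (j + 1))).card ∧
            Thick j (sl V (j + 1)))) := by
        intro V hV
        obtain ⟨h1, h2⟩ := mem_filter.mp hV
        rw [mem_union, mem_filter, mem_filter]
        by_cases h : ((∂ (sl V (j + 1))).card : ℝ) < g0
        · exact Or.inl ⟨h1, h2, h⟩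
        · push Not at h
          exact Or.inr ⟨h1, h2, h, auto_thick hn sl_card⟩
      have h1 : ((Phi j C).card : ℝ) ≤ ((UF n j).filter (fun V => sl V j ⊆ C ∧ ((∂ (sl V (j + 1))).card : ℝ) < g0)).card +
          ((UF n j).filter (fun V => sl V j ⊆ C ∧ g0 ≤ (∂ (sl V (j + 1))).card ∧
            Thick j (sl V (j + 1)))).card := by
        exact_mod_cast (card_le_card hcov).trans (card_union_le _ _)
      have x2 : 2 ≤ c / n ^ 3 := by
        rw [le_div_iff₀ (by positivity)]
        refine le_trans ?_ hc59
        calc 2 * (n:ℝ) ^ 3 ≤ n * n ^ 3 := by gcongr; linarith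
          _ = (n:ℝ) ^ 4 := by ring
          _ ≤ _ := pow_le_pow_right₀ (by linarith) (by norm_num)
      have key : m * g0 + 2 * (c / n ^ 50) + 2 * g0 ≤ (c / n ^ 3) / 2 := by
        have a1 : c / n ^ 50 ≤ g0 := by
          apply div_le_div_of_nonneg_left hc0.le (by positivity)
          exact pow_le_pow_right₀ (by linarith) (by norm_num)
        have hg00 : 0 < g0 := by positivity
        have a2 : n ^ 2 * g0 ≤ c / n ^ 3 := by
          rw [hg0, le_div_iff₀ (by positivity)]
          calc (n:ℝ) ^ 2 * (c / n ^ 20) * n ^ 3 = c / n ^ 15 := by field_simp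
            _ ≤ c := div_le_self hc0.le (one_le_pow₀ (by linarith))
        have a3 : m * g0 ≤ n * g0 := by gcongr
        have a4 : (n + 4) * 2 * g0 ≤ n ^ 2 * g0 := by gcongr; nlinarith
        nlinarith
      refine h1.trans ((add_le_add hs hl).trans ?_)
      have b1 : (2:ℝ) ^ (c + (m * g0 + 2 * (c / n ^ 50)) + (2 * g0 + E)) ≤ (2:ℝ) ^ (c + E + (c / n ^ 3) / 2) := by
        apply Real.rpow_le_rpow_of_exponent_le (by norm_num)
        linarith
      have b2 : (2:ℝ) ^ (c + E - g0 / n ^ 3) ≤ (2:ℝ) ^ (c + E + (c / n ^ 3) / 2) := by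
        apply Real.rpow_le_rpow_of_exponent_le (by norm_num)
        have : 0 ≤ g0 / n ^ 3 := by positivity
        linarith
      calc _ ≤ (2:ℝ) ^ (c + E + (c / n ^ 3) / 2) + (2:ℝ) ^ (c + E + (c / n ^ 3) / 2) := add_le_add b1 b2
        _ = (2:ℝ) ^ (c + E + (c / n ^ 3) / 2 + 1) := by rw [Real.rpow_add_one (by norm_num)]; ring
        _ ≤ _ := by
          apply Real.rpow_le_rpow_of_exponent_le (by norm_num)
          have : (1 + 1 / (n:ℝ) ^ 3) * c = c + c / n ^ 3 := by ring
          linarith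

end ShellAux

namespace ShellAux
open Finset
open scoped FinsetFamily

def low {n : ℕ} (j : ℕ) (V : Finset (Finset (Fin n))) : Finset (Finset (Fin n)) :=
  V.filter (fun x => x.card < j)

lemma mem_low {n r : ℕ} {V : Finset (Finset (Fin n))} {x : Finset (Fin n)} :
    x ∈ low r V ↔ x ∈ V ∧ x.card < r := by simp [low]

def Pf {n : ℕ} (j : ℕ) (L : Finset (Finset (Fin n))) : Finset (Finset (Fin n)) :=
  univ.filter (fun c => c.card = j ∧ ∀ y, y ⊂ c → y ∈ L)

lemma mem_Pf {n j : ℕ} {L : Finset (Finset (Fin n))} {c : Finset (Fin n)} :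
    c ∈ Pf j L ↔ c.card = j ∧ ∀ y, y ⊂ c → y ∈ L := by simp [Pf]

lemma low_up {n : ℕ} (j : ℕ) (V : Finset (Finset (Fin n))) : low j V ∪ up j V = V := by
  ext x; rw [mem_union, mem_low, mem_up]
  have := lt_or_ge x.card j
  tauto

lemma rare {n m j : ℕ} {E g0 : ℝ} (hp : Par n m) (hn : n ≤ 2 * j + 1) (hH : Hyp n (j + 1) E)
    (hN : ∀ C : Finset (Finset (Fin n)), (∀ c ∈ C, c.card = j) → (C.card : ℝ) ≤ g0 * n ^ 20)
    (hg30 : (n:ℝ) ^ 30 ≤ g0) :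
    (((UF n 0).filter (fun V => g0 ≤ (∂ (sl V (j + 1))).card ∧ Thick j (sl V (j + 1)))).card : ℝ) ≤
      (2:ℝ) ^ (E - g0 / n ^ 3) * (UF n 0).card := by
  set S := (UF n 0).filter (fun V => g0 ≤ (∂ (sl V (j + 1))).card ∧ Thick j (sl V (j + 1))) with hS
  have e1 := card_eq_sum_card_fiberwise (s := UF n 0) (t := (UF n 0).image (low j)) (f := low j)
    (fun V hV => mem_image_of_mem _ hV)
  have e2 := card_eq_sum_card_fiberwise (s := S) (t := (UF n 0).image (low j)) (f := low j)
    (fun V hV => mem_image_of_mem _ (filter_subset _ _ hV))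
  rw [e1, e2]
  push_cast
  rw [mul_sum]
  apply sum_le_sum
  intro L hL
  obtain ⟨V0, hV0, rfl⟩ := mem_image.mp hL
  rw [mem_UF] at hV0
  set L := low j V0 with hLdef
  have hPc : ∀ c ∈ Pf j L, c.card = j := fun c hc => (mem_Pf.mp hc).1
  have hl := large_sum (g0 := g0) hp hn hH hPc (hN _ hPc) hg30
  have f1 : ((S.filter (fun V => low j V = L)).card : ℝ) ≤ ((UF n j).filter (fun V => sl V j ⊆ Pf j L ∧
      g0 ≤ (∂ (sl V (j + 1))).card ∧ Thick j (sl V (j + 1)))).card := by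
    norm_cast
    apply card_le_card_of_injOn (up j)
    · intro V hV
      simp only [hS, coe_filter, mem_filter, Set.mem_ofPred_eq] at hV ⊢
      obtain ⟨⟨hV1, hV2, hV3⟩, hV4⟩ := hV
      rw [mem_UF] at hV1
      refine ⟨mem_UF.mpr (up_UF (Nat.zero_le _) hV1), ?_, ?_, ?_⟩
      · rw [sl_up (le_refl _)]
        intro c hc
        rw [mem_sl] at hc
        refine mem_Pf.mpr ⟨hc.2, fun y hy => ?_⟩
        rw [← hV4, mem_low]
        exact ⟨(hV1 c hc.1).2 y hy.1 (Nat.zero_le _), hc.2 ▸ card_lt_card hy⟩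
      · rw [sl_up (by omega)]; exact hV2
      · rw [sl_up (by omega)]; exact hV3
    · intro V hV V' hV' h
      simp only [coe_filter, Set.mem_ofPred_eq] at hV hV'
      rw [← low_up j V, ← low_up j V', hV.2, hV'.2, h]
  have f2 : (2:ℝ) ^ ((Pf j L).card : ℝ) ≤ (((UF n 0).filter (fun V => low j V = L)).card : ℝ) := by
    rw [Real.rpow_natCast]
    norm_cast
    rw [← card_powerset]
    have hLc : ∀ x ∈ L, x.card < j := fun x hx => (mem_low.mp hx).2
    apply card_le_card_of_injOn (fun T => L ∪ T)
    · intro T hT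
      simp only [coe_powerset, Set.mem_preimage, Set.mem_powerset_iff, coe_subset] at hT
      simp only [coe_filter, Set.mem_ofPred_eq]
      constructor
      · rw [mem_UF]
        intro x hx
        refine ⟨Nat.zero_le _, fun y hy _ => ?_⟩
        rcases mem_union.mp hx with hx | hx
        · apply mem_union_left
          rw [hLdef, mem_low] at hx ⊢
          exact ⟨(hV0 x hx.1).2 y hy (Nat.zero_le _), (card_le_card hy).trans_lt hx.2⟩
        · rcases eq_or_ssubset_of_subset hy with h | h
          · rw [h]; exact mem_union_right _ hx
          · exact mem_union_left _ ((mem_Pf.mp (hT hx)).2 y h)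
      · ext x
        rw [mem_low, mem_union]
        constructor
        · rintro ⟨h | h, h2⟩
          · exact h
          · have := hPc x (hT h); omega
        · intro h; exact ⟨Or.inl h, hLc x h⟩
    · intro T hT T' hT' h
      simp only [coe_powerset, Set.mem_preimage, Set.mem_powerset_iff, coe_subset] at hT hT'
      have key : ∀ T, T ⊆ Pf j L → sl (L ∪ T) j = T := by
        intro T hT
        ext x
        rw [mem_sl, mem_union]
        constructor
        · rintro ⟨h | h, h2⟩
          · have := hLc x h; omega
          · exact h
        · intro h; exact ⟨Or.inr h, hPc x (hT h)⟩
      rw [← key T hT, ← key T' hT']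
      simp only at h
      rw [h]
  refine f1.trans (hl.trans ?_)
  calc _ = (2:ℝ) ^ (E - g0 / n ^ 3) * (2:ℝ) ^ ((Pf j L).card : ℝ) := by
        rw [← Real.rpow_add (by norm_num)]; congr 1; ring
    _ ≤ _ := by gcongr

def dual {n : ℕ} (V : Finset (Finset (Fin n))) : Finset (Finset (Fin n)) :=
  univ.filter (fun x => xᶜ ∉ V)

lemma mem_dual {n : ℕ} {V : Finset (Finset (Fin n))} {x : Finset (Fin n)} :
    x ∈ dual V ↔ xᶜ ∉ V := by simp [dual]

lemma dual_dual {n : ℕ} (V : Finset (Finset (Fin n))) : dual (dual V) = V := by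
  ext x; rw [mem_dual, mem_dual, compl_compl, not_not]

lemma dual_UF {n : ℕ} {V : Finset (Finset (Fin n))} (h : IsUF 0 V) : IsUF 0 (dual V) := by
  intro x hx
  rw [mem_dual] at hx
  refine ⟨Nat.zero_le _, fun y hy _ => mem_dual.mpr (fun h2 => hx ?_)⟩
  exact (h _ h2).2 _ (compl_subset_compl.mpr hy) (Nat.zero_le _)

lemma dual_count {n : ℕ} (Q : Finset (Finset (Fin n)) → Prop) :
    ((UF n 0).filter (fun V => Q (dual V))).card ≤ ((UF n 0).filter Q).card := by
  apply card_le_card_of_injOn dual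
  · intro V hV
    simp only [coe_filter, Set.mem_ofPred_eq] at hV ⊢
    exact ⟨mem_UF.mpr (dual_UF (mem_UF.mp hV.1)), hV.2⟩
  · intro V _ V' _ h
    rw [← dual_dual V, h, dual_dual]

end ShellAux

namespace ShellAux
open Finset
open scoped FinsetFamily

def Good {n : ℕ} (s : ℕ) (Δ : Finset (Finset (Fin n))) : Finset (Finset (Fin n)) :=
  univ.filter (fun F => F.card = s ∧ (∀ y, y ⊆ F → y.card + 2 = s → y ∈ Δ) ∧
    ∀ G ∈ Δ, G.card = s → (G ∩ F).card + 2 ≤ s)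

lemma mem_Good {n s : ℕ} {Δ : Finset (Finset (Fin n))} {F : Finset (Fin n)} :
    F ∈ Good s Δ ↔ F.card = s ∧ (∀ y, y ⊆ F → y.card + 2 = s → y ∈ Δ) ∧
    ∀ G ∈ Δ, G.card = s → (G ∩ F).card + 2 ≤ s := by simp [Good]

lemma iso_contra {n s : ℕ} {Δ : Finset (Finset (Fin n))} (hΔ : IsComplex Δ) {F D y : Finset (Fin n)}
    {v : Fin n} (hiso : ∀ G ∈ Δ, G.card = s → G ≠ F → (G ∩ F).card + 2 ≤ s)
    (hD : D ⊆ F) (hDs : D.card + 1 = s) (hv : v ∉ F) (hy : y ∈ Δ) (hsub : insert v D ⊆ y) : False := by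
  have hvD : v ∉ D := fun h => hv (hD h)
  have hG := hΔ.2 y hy (insert v D) ⟨v, mem_insert_self _ _⟩ hsub
  have h1 := hiso _ hG (by rw [card_insert_of_notMem hvD]; exact hDs)
    (fun h => hv (h ▸ mem_insert_self v D))
  have h2 : D.card ≤ (insert v D ∩ F).card :=
    card_le_card (subset_inter (subset_insert _ _) hD)
  omega

lemma iso_facet {n s : ℕ} {Δ : Finset (Finset (Fin n))} (hΔ : IsComplex Δ) {F : Finset (Fin n)}
    (hs : 1 ≤ s) (hF : F ∈ Δ) (hFs : F.card = s)
    (hiso : ∀ G ∈ Δ, G.card = s → G ≠ F → (G ∩ F).card + 2 ≤ s) : IsFacet Δ F := by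
  refine ⟨hF, fun y hy hFy => ?_⟩
  by_contra hne
  obtain ⟨v, hvy, hvF⟩ := exists_of_ssubset (ssubset_of_subset_of_ne hFy (Ne.symm hne))
  obtain ⟨u, hu⟩ : F.Nonempty := card_pos.mp (by omega)
  refine iso_contra hΔ hiso (erase_subset u F) (by rw [card_erase_of_mem hu]; omega) hvF hy ?_
  intro z hz
  rcases mem_insert.mp hz with rfl | hz
  · exact hvy
  · exact hFy (mem_of_mem_erase hz)

lemma no_shell {n s : ℕ} {Δ : Finset (Finset (Fin n))} (hΔ : IsComplex Δ) (hsh : Shellable Δ)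
    {F F' : Finset (Fin n)} (hs : n < 2 * s) (hF : F ∈ Δ) (hF' : F' ∈ Δ) (hne : F ≠ F')
    (hFs : F.card = s) (hFs' : F'.card = s)
    (hiso : ∀ G ∈ Δ, G.card = s → G ≠ F → (G ∩ F).card + 2 ≤ s)
    (hiso' : ∀ G ∈ Δ, G.card = s → G ≠ F' → (G ∩ F').card + 2 ≤ s) : False := by
  obtain ⟨m, x, hinj, hfac, hshell⟩ := hsh
  obtain ⟨i, hi⟩ := (hfac F).mp (iso_facet hΔ (by omega) hF hFs hiso)
  obtain ⟨j, hj⟩ := (hfac F').mp (iso_facet hΔ (by omega) hF' hFs' hiso')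
  have hnonempty : (F ∩ F').Nonempty := by
    rw [← card_pos]
    have h1 := card_union_add_card_inter F F'
    have h2 : (F ∪ F').card ≤ n := by simpa using card_le_univ (F ∪ F')
    omega
  have main : ∀ (i j : Fin m) (K : Finset (Fin n)), x j = K → K.card = s →
      (∀ G ∈ Δ, G.card = s → G ≠ K → (G ∩ K).card + 2 ≤ s) → i < j → (x i ∩ x j).Nonempty → False := by
    intro i j K hj hK hiso hij hn
    obtain ⟨l, hl, _, hl2⟩ := hshell i j hij hn
    have hfl : IsFacet Δ (x l) := (hfac _).mpr ⟨l, rfl⟩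
    have hfj : IsFacet Δ (x j) := (hfac _).mpr ⟨j, rfl⟩
    have hnsub : ¬ x l ⊆ x j := by
      intro h
      have := hfl.2 _ hfj.1 h
      have := hinj this
      rw [this] at hl
      exact lt_irrefl _ hl
    obtain ⟨v, hv1, hv2⟩ := not_subset.mp hnsub
    rw [hj] at hv2 hl2
    refine iso_contra hΔ hiso (inter_subset_right : x l ∩ K ⊆ K) (by omega) hv2 hfl.1 ?_
    intro z hz
    rcases mem_insert.mp hz with rfl | hz
    · exact hv1
    · exact (mem_inter.mp hz).1
  rcases lt_trichotomy i j with h | h | h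
  · exact main i j F' hj hFs' hiso' h (by rw [hi, hj]; exact hnonempty)
  · apply hne; rw [← hi, ← hj, h]
  · exact main j i F hi hFs hiso h (by rw [hi, hj, inter_comm]; exact hnonempty)

def addF {n : ℕ} (Δ : Finset (Finset (Fin n))) (F : Finset (Fin n)) : Finset (Finset (Fin n)) :=
  Δ ∪ F.powerset.erase ∅

lemma mem_addF {n : ℕ} {Δ : Finset (Finset (Fin n))} {F y : Finset (Fin n)} :
    y ∈ addF Δ F ↔ y ∈ Δ ∨ (y.Nonempty ∧ y ⊆ F) := by
  rw [addF, mem_union, mem_erase, mem_powerset, nonempty_iff_ne_empty]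

lemma addF_complex {n : ℕ} {Δ : Finset (Finset (Fin n))} (hΔ : IsComplex Δ) (F : Finset (Fin n)) :
    IsComplex (addF Δ F) := by
  constructor
  · intro x hx
    rcases mem_addF.mp hx with h | h
    · exact hΔ.1 x h
    · exact h.1
  · intro x hx y hy hyx
    rcases mem_addF.mp hx with h | h
    · exact mem_addF.mpr (Or.inl (hΔ.2 x h y hy hyx))
    · exact mem_addF.mpr (Or.inr ⟨hy, hyx.trans h.2⟩)

lemma addF_iso {n s : ℕ} {Δ : Finset (Finset (Fin n))} {F : Finset (Fin n)} (hF : F ∈ Good s Δ) :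
    ∀ G ∈ addF Δ F, G.card = s → G ≠ F → (G ∩ F).card + 2 ≤ s := by
  intro G hG hGs hne
  obtain ⟨h1, _, h3⟩ := mem_Good.mp hF
  rcases mem_addF.mp hG with h | h
  · exact h3 G h hGs
  · exact absurd (eq_of_subset_of_card_le h.2 (by omega)) hne

lemma switch {n s : ℕ} (hs : n < 2 * s) (hs3 : 3 ≤ s) (B : ℕ) :
    ((allComplexes n).filter (fun Δ => Shellable Δ ∧ B ≤ (Good s Δ).card)).card * B ≤
      2 * 2 ^ s * (allComplexes n).card := by
  set 𝒮 := (allComplexes n).filter (fun Δ => Shellable Δ ∧ B ≤ (Good s Δ).card) with h𝒮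
  have h𝒮m : ∀ Δ ∈ 𝒮, IsComplex Δ ∧ Shellable Δ ∧ B ≤ (Good s Δ).card := by
    intro Δ hΔ
    obtain ⟨h1, h2⟩ := mem_filter.mp hΔ
    exact ⟨(mem_filter.mp h1).2, h2⟩
  set T := 𝒮.sigma (fun Δ => Good s Δ) with hT
  have hlow : 𝒮.card * B ≤ T.card := by
    rw [hT, card_sigma, ← smul_eq_mul]
    exact card_nsmul_le_sum _ _ _ (fun Δ hΔ => (h𝒮m Δ hΔ).2.2)
  refine hlow.trans ?_
  have hmaps : ∀ p ∈ T, addF p.1 p.2 ∈ allComplexes n := by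
    intro p hp
    rw [hT, mem_sigma] at hp
    simp only [allComplexes, mem_filter, mem_univ, true_and]
    exact addF_complex (h𝒮m _ hp.1).1 _
  rw [card_eq_sum_card_fiberwise (s := T) (t := allComplexes n) (f := fun p : (_ : Finset (Finset (Fin n))) × Finset (Fin n) => addF p.1 p.2) hmaps, mul_comm, ← smul_eq_mul]
  apply sum_le_card_nsmul
  intro Δ' _
  set R := T.filter (fun p => addF p.1 p.2 = Δ') with hR
  have hRm : ∀ p ∈ R, IsComplex p.1 ∧ Shellable p.1 ∧ p.2 ∈ Good s p.1 ∧ addF p.1 p.2 = Δ' := by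
    intro p hp
    obtain ⟨h1, h2⟩ := mem_filter.mp hp
    rw [hT, mem_sigma] at h1
    exact ⟨(h𝒮m _ h1.1).1, (h𝒮m _ h1.1).2.1, h1.2, h2⟩
  have h1 := card_le_mul_card_image (f := fun p : (_ : Finset (Finset (Fin n))) × Finset (Fin n) => p.2) R (2 ^ s) ?_
  have h2 : (R.image (fun p => p.2)).card ≤ 2 := by
    by_contra hcon
    push Not at hcon
    obtain ⟨F1, m1, F2, m2, F3, m3, n12, n13, n23⟩ := two_lt_card.mp hcon
    obtain ⟨⟨Δ1, F1⟩, p1, rfl⟩ := mem_image.mp m1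
    obtain ⟨⟨Δ2, F2⟩, p2, rfl⟩ := mem_image.mp m2
    obtain ⟨⟨Δ3, F3⟩, p3, rfl⟩ := mem_image.mp m3
    obtain ⟨c1, s1, g1, a1⟩ := hRm _ p1
    obtain ⟨c2, s2, g2, a2⟩ := hRm _ p2
    obtain ⟨c3, s3, g3, a3⟩ := hRm _ p3
    simp only at *
    have hsub : Δ1 ⊆ Δ' := by rw [← a1]; exact subset_union_left
    have i2 := addF_iso g2
    have i3 := addF_iso g3
    rw [a2] at i2
    rw [a3] at i3
    have k1 := (mem_Good.mp g1).1
    have k2 := (mem_Good.mp g2).1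
    have k3 := (mem_Good.mp g3).1
    have hin : ∀ (K : Finset (Fin n)) (L : Finset (Finset (Fin n))), K.card = s → addF L K = Δ' → F1 ≠ K → K ∈ Δ1 := by
      intro K L hK hL hne
      have : K ∈ addF Δ1 F1 := by
        rw [a1, ← hL, mem_addF]
        exact Or.inr ⟨card_pos.mp (by omega), le_refl _⟩
      rcases mem_addF.mp this with h | h
      · exact h
      · exact absurd (eq_of_subset_of_card_le h.2 (by omega)).symm hne
    exact no_shell c1 s1 hs (hin F2 Δ2 k2 a2 n12) (hin F3 Δ3 k3 a3 n13) n23 k2 k3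
      (fun G hG => i2 G (hsub hG)) (fun G hG => i3 G (hsub hG))
  · refine h1.trans ?_
    rw [mul_comm]
    exact Nat.mul_le_mul_right _ h2
  · intro F hF
    obtain ⟨⟨Δ0, F0⟩, hp0, rfl⟩ := mem_image.mp hF
    obtain ⟨_, _, g0, _⟩ := hRm _ hp0
    have k0 := (mem_Good.mp g0).1
    simp only at k0 ⊢
    have hc : ((F0.powersetCard (s - 1)).powerset).card = 2 ^ s := by
      rw [card_powerset, card_powersetCard, k0, Nat.choose_symm_of_eq_add (by omega : s = (s - 1) + 1),
        Nat.choose_one_right]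
    rw [← hc]
    apply card_le_card_of_injOn (fun p => p.1.filter (fun y => y ⊆ F0 ∧ y.card + 1 = s))
    · intro p _
      simp only [coe_powerset, Set.mem_preimage, Set.mem_powerset_iff, coe_subset]
      intro y hy
      obtain ⟨_, h1, h2⟩ := mem_filter.mp hy
      exact mem_powersetCard.mpr ⟨h1, by omega⟩
    · have key : ∀ p ∈ R, p.2 = F0 → ∀ y, y ∈ p.1 ↔
          ((y ∈ Δ' ∧ ¬ y ⊆ F0) ∨ y ∈ p.1.filter (fun y => y ⊆ F0 ∧ y.card + 1 = s) ∨
            (y ⊆ F0 ∧ y.Nonempty ∧ y.card + 2 ≤ s)) := by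
        rintro ⟨Δ, F⟩ hp hpF y
        obtain ⟨c, _, g, a⟩ := hRm _ hp
        simp only at *
        subst hpF
        obtain ⟨gg1, gg2, gg3⟩ := mem_Good.mp g
        rw [← a, mem_addF, mem_filter]
        constructor
        · intro hy
          by_cases hyF : y ⊆ F
          · right
            have h5 := card_le_card hyF
            rcases lt_trichotomy (y.card + 1) s with h | h | h
            · exact Or.inr ⟨hyF, c.1 y hy, by omega⟩
            · exact Or.inl ⟨hy, hyF, h⟩
            · exfalso
              have := eq_of_subset_of_card_le hyF (by omega)
              rw [this] at hy
              have := gg3 F hy gg1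
              rw [inter_self] at this
              omega
          · exact Or.inl ⟨Or.inl hy, hyF⟩
        · rintro (⟨h | h, h2⟩ | h | ⟨h, h2, h3⟩)
          · exact h
          · exact absurd h.2 h2
          · exact h.1
          · obtain ⟨z, hz1, hz2, hz3⟩ := exists_subsuperset_card_eq h (n := s - 2) (by omega) (by omega)
            exact c.2 z (gg2 z hz2 (by omega)) y h2 hz1
      rintro ⟨Δ, F⟩ hp ⟨Δ2, F2⟩ hp2 heq
      simp only [coe_filter, Set.mem_ofPred_eq] at hp hp2 heq
      have e1 := key _ hp.1 hp.2
      have e2 := key _ hp2.1 hp2.2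
      obtain ⟨_, rfl⟩ := hp
      obtain ⟨_, rfl⟩ := hp2
      simp only at *
      have : Δ = Δ2 := by
        ext y
        rw [e1, e2, heq]
      subst this
      rfl

end ShellAux

namespace ShellAux
open Finset
open scoped FinsetFamily

lemma pairs_in {n k : ℕ} {A : Finset (Finset (Fin n))} (hA : ∀ x ∈ A, x.card = k) :
    ((A ×ˢ (univ : Finset (Fin n))).filter (fun p => p.2 ∈ p.1)).card = A.card * k := by
  rw [card_filter, sum_product]
  calc _ = ∑ x ∈ A, x.card := by
        apply sum_congr rfl
        intro x _
        simp
    _ = _ := by rw [sum_congr rfl hA, sum_const, smul_eq_mul]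

lemma pairs_out {n k : ℕ} {A : Finset (Finset (Fin n))} (hA : ∀ x ∈ A, x.card = k) :
    ((A ×ˢ (univ : Finset (Fin n))).filter (fun p => p.2 ∉ p.1)).card = A.card * (n - k) := by
  rw [card_filter, sum_product]
  calc _ = ∑ x ∈ A, xᶜ.card := by
        apply sum_congr rfl
        intro x _
        rw [← card_filter]
        congr 1
        ext v; simp
    _ = ∑ x ∈ A, (n - k) := by
        apply sum_congr rfl
        intro x hx
        rw [card_compl, Fintype.card_fin, hA x hx]
    _ = _ := by rw [sum_const, smul_eq_mul]

def Bf {n : ℕ} (j : ℕ) (K : Finset (Finset (Fin n))) : Finset (Finset (Fin n)) :=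
  univ.filter (fun F => F.card = j + 2 ∧ ∀ x, x ⊆ F → x.card = j + 1 → x ∈ K)

lemma mem_Bf {n j : ℕ} {K : Finset (Finset (Fin n))} {F : Finset (Fin n)} :
    F ∈ Bf j K ↔ F.card = j + 2 ∧ ∀ x, x ⊆ F → x.card = j + 1 → x ∈ K := by simp [Bf]

lemma thin_count {n j : ℕ} (hn : n = 2 * j + 1) (hj : 10 ≤ j) {A : Finset (Finset (Fin n))}
    (hA : ∀ x ∈ A, x.card = j + 1) (hth : ¬ Thick j A) :
    (∂ A).card ≤ 4 * (Bf j (Kf j (∂ A))).card := by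
  unfold Thick at hth
  push Not at hth
  set G := ∂ A with hG
  have hGc : ∀ c ∈ G, c.card = j := fun c hc => by
    obtain ⟨_, _, _, h⟩ := (mem_shadow' hA).mp hc
    exact h
  set K := Kf j G with hK
  set B := Bf j K with hB
  have hKc : ∀ x ∈ K, x.card = j + 1 := Kf_card
  have hag : K.card ≤ G.card := Kf_card_le (by omega) _
  set T := (K ×ˢ (univ : Finset (Fin n))).filter (fun p => p.2 ∉ p.1) with hT
  have hTc : T.card = K.card * j := by
    rw [hT, pairs_out hKc]; congr 1; omega
  set I := (G ×ˢ (univ : Finset (Fin n))).filter (fun p => p.2 ∉ p.1 ∧ insert p.2 p.1 ∉ K) with hI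
  have hIc : I.card + K.card * (j + 1) ≤ G.card * (j + 1) := by
    have h1 := pairs_out hGc
    have h2 : n - j = j + 1 := by omega
    rw [h2] at h1
    rw [← h1, ← pairs_in hKc]
    set P := (G ×ˢ (univ : Finset (Fin n))).filter (fun p => p.2 ∉ p.1) with hP
    have h3 : ((K ×ˢ (univ : Finset (Fin n))).filter (fun p => p.2 ∈ p.1)).card ≤ (P \ I).card := by
      apply card_le_card_of_injOn (fun p => (p.1.erase p.2, p.2))
      · rintro ⟨x, v⟩ hp
        simp only [coe_filter, mem_product, mem_univ, and_true, Set.mem_ofPred_eq] at hp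
        simp only [mem_coe, mem_sdiff, hP, hI, mem_filter, mem_product, mem_univ, and_true]
        have h4 : x.erase v ∈ G := (mem_Kf.mp hp.1).2 _ (erase_subset _ _)
          (by rw [card_erase_of_mem hp.2, hKc x hp.1]; omega)
        refine ⟨⟨h4, notMem_erase _ _⟩, fun h => h.2.2 ?_⟩
        rw [insert_erase hp.2]; exact hp.1
      · rintro ⟨x, v⟩ hp ⟨y, w⟩ hq h
        simp only [coe_filter, mem_product, mem_univ, and_true, Set.mem_ofPred_eq] at hp hq
        simp only [Prod.mk.injEq] at h
        obtain ⟨h1, rfl⟩ := h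
        rw [← insert_erase hp.2, h1, insert_erase hq.2]
    have h5 : I ⊆ P := by
      intro p hp
      obtain ⟨h1, h2⟩ := mem_filter.mp hp
      exact mem_filter.mpr ⟨h1, h2.1⟩
    rw [card_sdiff_of_subset h5] at h3
    have := card_le_card h5
    omega
  have hgood : (T.filter (fun p => insert p.2 p.1 ∈ B)).card ≤ B.card * n := by
    have : B.card * n = (B ×ˢ (univ : Finset (Fin n))).card := by rw [card_product]; simp
    rw [this]
    apply card_le_card_of_injOn (fun p => (insert p.2 p.1, p.2))
    · rintro ⟨x, v⟩ hp
      have := (mem_filter.mp hp).2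
      simpa using this
    · rintro ⟨x, v⟩ hp ⟨y, w⟩ hq h
      simp only [Prod.mk.injEq] at h
      obtain ⟨h1, rfl⟩ := h
      have h2 := (mem_filter.mp (mem_filter.mp hp).1).2
      have h3 := (mem_filter.mp (mem_filter.mp hq).1).2
      simp only at h2 h3
      rw [← erase_insert h2, h1, erase_insert h3]
  have hbad : (T.filter (fun p => insert p.2 p.1 ∉ B)).card ≤ I.card * n := by
    have h0 : (I ×ˢ (univ : Finset (Fin n))).card = I.card * n := by rw [card_product]; simp
    rw [← h0]
    refine (card_le_card ?_).trans (card_image_le (f := fun q : (Finset (Fin n) × Fin n) × Fin n => (insert q.2 q.1.1, q.1.2)))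
    rintro ⟨x, v⟩ hp
    obtain ⟨h1, h2⟩ := mem_filter.mp hp
    obtain ⟨h3, h4⟩ := mem_filter.mp h1
    have hxK : x ∈ K := (mem_product.mp h3).1
    simp only at h2 h4
    have hxc := hKc x hxK
    rw [hB, mem_Bf] at h2
    push Not at h2
    obtain ⟨x', hx'1, hx'2, hx'3⟩ := h2 (by rw [card_insert_of_notMem h4, hxc])
    have hv : v ∈ x' := by
      by_contra hv
      have h5 : x' ⊆ x := by
        intro z hz
        rcases mem_insert.mp (hx'1 hz) with rfl | h
        · exact absurd hz hv
        · exact h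
      have := eq_of_subset_of_card_le h5 (by omega)
      exact hx'3 (this ▸ hxK)
    have hcx : x'.erase v ⊆ x := by
      intro z hz
      rw [mem_erase] at hz
      exact mem_of_mem_insert_of_ne (hx'1 hz.2) hz.1
    have hcc : (x'.erase v).card = j := by rw [card_erase_of_mem hv]; omega
    obtain ⟨w, hw1, hw2⟩ := exists_mem_notMem_of_card_lt_card (s := x'.erase v) (t := x) (by omega)
    refine mem_image.mpr ⟨((x'.erase v, v), w), ?_, ?_⟩
    · simp only [mem_product, mem_univ, and_true, hI, mem_filter]
      refine ⟨(mem_Kf.mp hxK).2 _ hcx hcc, notMem_erase _ _, ?_⟩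
      rw [insert_erase hv]; exact hx'3
    · simp only [Prod.mk.injEq, and_true]
      apply eq_of_subset_of_card_le
      · intro z hz
        rcases mem_insert.mp hz with rfl | h
        · exact hw1
        · exact hcx h
      · rw [card_insert_of_notMem hw2]; omega
  have hsplit := card_filter_add_card_filter_not (s := T) (fun p => insert p.2 p.1 ∈ B)
  obtain ⟨b, hb⟩ := Nat.exists_eq_add_of_le hag
  rw [hb, Nat.add_sub_cancel_left] at hth
  rw [hb] at hIc ⊢
  have e1 : I.card ≤ b * (j + 1) := by
    rw [add_mul] at hIc; omega
  have e2 : I.card * n ≤ b * (j + 1) * n := Nat.mul_le_mul_right _ e1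
  have e3 : K.card * j ≤ B.card * n + b * (j + 1) * n := by omega
  set a := K.card
  set u := B.card
  have e4 : (5 * n * b) * (j + 1) ≤ (a + b) * (j + 1) := Nat.mul_le_mul_right _ hth.le
  have e5 : 5 * b * j ≤ a + b := by
    refine le_trans ?_ hth.le
    rw [hn]; nlinarith
  have e6 : (a + b) * (4 * j) ≤ 5 * (u * n) + 2 * (a + b) := by nlinarith
  rw [hn] at e6
  have e7 : (a + b) * 10 ≤ (a + b) * j := Nat.mul_le_mul_left _ hj
  by_contra hcon
  push Not at hcon
  have e8 : (4 * u + 1) * (2 * j + 1) ≤ (a + b) * (2 * j + 1) := Nat.mul_le_mul_right _ hcon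
  nlinarith

lemma Bf_V {n j : ℕ} {V : Finset (Finset (Fin n))} (hV : IsUF 0 V) {F : Finset (Fin n)}
    (hF : F ∈ Bf j (Kf j (∂ (sl V (j + 1))))) : ∀ y, y ⊆ F → y.card + 2 = j + 2 → y ∈ V := by
  intro y hy hyc
  obtain ⟨h1, h2⟩ := mem_Bf.mp hF
  obtain ⟨x, hx1, hx2, hx3⟩ := exists_subsuperset_card_eq hy (n := j + 1) (by omega) (by omega)
  have h3 := (mem_Kf.mp (h2 x hx2 hx3)).2 y hx1 (by omega)
  exact (mem_sl.mp (shadow_sl_subset (Nat.zero_le _) hV h3)).1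

lemma good_lower {n s : ℕ} (hs : 1 ≤ s) {V 𝓑 : Finset (Finset (Fin n))} (h1 : ∀ F ∈ 𝓑, F.card = s)
    (h2 : ∀ F ∈ 𝓑, ∀ y, y ⊆ F → y.card + 2 = s → y ∈ V) :
    𝓑.card ≤ (Good s V).card + (sl V s).card * n ^ 2 := by
  have h0 : (sl V s).card * n ^ 2 = (sl V s ×ˢ (univ : Finset (Fin n)) ×ˢ (univ : Finset (Fin n))).card := by
    rw [card_product, card_product, card_univ, Fintype.card_fin, sq]
  rw [h0]
  refine le_trans (card_le_card (t := Good s V ∪ (sl V s ×ˢ (univ : Finset (Fin n)) ×ˢ (univ : Finset (Fin n))).image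
    (fun p => insert p.2.1 (p.1.erase p.2.2))) ?_) ((card_union_le _ _).trans (Nat.add_le_add_left card_image_le _))
  intro F hF
  rw [mem_union]
  by_cases hg : ∀ G ∈ V, G.card = s → (G ∩ F).card + 2 ≤ s
  · exact Or.inl (mem_Good.mpr ⟨h1 F hF, h2 F hF, hg⟩)
  · right
    push Not at hg
    obtain ⟨G, hG1, hG2, hG3⟩ := hg
    have hFs := h1 F hF
    have hgm : G ∈ sl V s := mem_sl.mpr ⟨hG1, hG2⟩
    by_cases he : G = F
    · rcases F.eq_empty_or_nonempty with h | ⟨v, hv⟩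
      · exfalso
        rw [h, card_empty] at hFs
        omega
      · exact mem_image.mpr ⟨(G, v, v), by simp [hgm], by simp only [he]; exact insert_erase hv⟩
    · have hi := card_le_card (inter_subset_left : G ∩ F ⊆ G)
      have hne : G ∩ F ≠ G := by
        intro h
        have : G ⊆ F := by rw [← h]; exact inter_subset_right
        exact he (eq_of_subset_of_card_le this (by omega))
      have hlt := card_lt_card (ssubset_of_subset_of_ne (inter_subset_left : G ∩ F ⊆ G) hne)
      obtain ⟨w, hw1, hw2⟩ := exists_mem_notMem_of_card_lt_card (s := G ∩ F) (t := G) (by omega)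
      obtain ⟨v, hv1, hv2⟩ := exists_mem_notMem_of_card_lt_card (s := G ∩ F) (t := F) (by omega)
      have hwF : w ∉ F := fun h => hw2 (mem_inter.mpr ⟨hw1, h⟩)
      have e1 : G.erase w = G ∩ F := by
        symm
        apply eq_of_subset_of_card_le
        · intro z hz
          rw [mem_inter] at hz
          exact mem_erase.mpr ⟨fun h => hwF (h ▸ hz.2), hz.1⟩
        · rw [card_erase_of_mem hw1]; omega
      refine mem_image.mpr ⟨(G, v, w), by simp [hgm], ?_⟩
      simp only
      rw [e1]
      apply eq_of_subset_of_card_le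
      · intro z hz
        rcases mem_insert.mp hz with rfl | h
        · exact hv1
        · exact (mem_inter.mp h).2
      · rw [card_insert_of_notMem hv2]; omega

def Full {n : ℕ} (s : ℕ) (V : Finset (Finset (Fin n))) : Finset (Finset (Fin n)) :=
  univ.filter (fun F => F.card = s ∧ ∀ y, y ⊆ F → y.card + 2 = s → y ∈ V)

lemma mem_Full {n s : ℕ} {V : Finset (Finset (Fin n))} {F : Finset (Fin n)} :
    F ∈ Full s V ↔ F.card = s ∧ ∀ y, y ⊆ F → y.card + 2 = s → y ∈ V := by simp [Full]

lemma missing_card {n r t : ℕ} (h : r + t = n) (V : Finset (Finset (Fin n))) :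
    ((univ : Finset (Finset (Fin n))).filter (fun y => y.card = r ∧ y ∉ V)).card ≤ (sl (dual V) t).card := by
  apply card_le_card_of_injOn compl
  · intro y hy
    simp only [coe_filter, mem_univ, true_and, Set.mem_ofPred_eq] at hy
    rw [mem_coe, mem_sl, mem_dual, compl_compl, card_compl, Fintype.card_fin]
    exact ⟨hy.2, by omega⟩
  · intro x _ y _ h
    exact compl_injective h

lemma full_lower {n s t : ℕ} (hs : 2 ≤ s) (h : s - 2 + t = n) (V : Finset (Finset (Fin n))) :
    n.choose s ≤ (Full s V).card + (sl (dual V) t).card * n ^ 2 := by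
  set M := (univ : Finset (Finset (Fin n))).filter (fun y => y.card = s - 2 ∧ y ∉ V) with hM
  have h0 : M.card * n ^ 2 = (M ×ˢ (univ : Finset (Fin n)) ×ˢ (univ : Finset (Fin n))).card := by
    rw [card_product, card_product, card_univ, Fintype.card_fin, sq]
  have h1 : M.card * n ^ 2 ≤ (sl (dual V) t).card * n ^ 2 := Nat.mul_le_mul_right _ (missing_card h V)
  refine le_trans ?_ (Nat.add_le_add_left h1 _)
  rw [h0]
  have hL : n.choose s = (powersetCard s (univ : Finset (Fin n))).card := by
    rw [card_powersetCard]; simp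
  rw [hL]
  refine le_trans (card_le_card (t := Full s V ∪ (M ×ˢ (univ : Finset (Fin n)) ×ˢ (univ : Finset (Fin n))).image
    (fun p => insert p.2.1 (insert p.2.2 p.1))) ?_) ((card_union_le _ _).trans (Nat.add_le_add_left card_image_le _))
  intro F hF
  have hFs := (mem_powersetCard.mp hF).2
  rw [mem_union]
  by_cases hg : ∀ y, y ⊆ F → y.card + 2 = s → y ∈ V
  · exact Or.inl (mem_Full.mpr ⟨hFs, hg⟩)
  · right
    push Not at hg
    obtain ⟨y, hy1, hy2, hy3⟩ := hg
    have hd : (F \ y).card = 2 := by rw [card_sdiff_of_subset hy1]; omega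
    obtain ⟨a, b, hab, hd2⟩ := card_eq_two.mp hd
    refine mem_image.mpr ⟨(y, a, b), ?_, ?_⟩
    · simp only [mem_product, mem_univ, and_true, hM, mem_filter, true_and]
      exact ⟨by omega, hy3⟩
    · simp only
      rw [← sdiff_union_of_subset hy1, hd2]
      ext z; simp

end ShellAux

namespace ShellAux
open Finset
open scoped FinsetFamily

def Rare {n : ℕ} (j : ℕ) (g0 : ℝ) (V : Finset (Finset (Fin n))) : Prop :=
  g0 ≤ (∂ (sl V (j + 1))).card ∧ Thick j (sl V (j + 1))

lemma not_rare {n j : ℕ} {g0 : ℝ} (hn : n ≤ 2 * j) {V : Finset (Finset (Fin n))} (h : ¬ Rare j g0 V) :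
    ((sl V (j + 1)).card : ℝ) ≤ g0 := by
  have h1 : ((∂ (sl V (j + 1))).card : ℝ) < g0 := by
    by_contra hc
    push Not at hc
    exact h ⟨hc, auto_thick hn sl_card⟩
  have h2 : ((sl V (j + 1)).card : ℝ) ≤ (∂ (sl V (j + 1))).card := by
    exact_mod_cast card_le_shadow (by omega) sl_card
  linarith

lemma structure_even {n k : ℕ} {N : ℝ} (hnl : 10 ^ 8 ≤ n) (hN : N = n.choose (n / 2)) (hnk : n = 2 * k)
    {V : Finset (Finset (Fin n))}
    (h1 : ¬ Rare k (N / n ^ 20) V) (h2 : ¬ Rare k (N / n ^ 20) (dual V)) :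
    N / n ^ 11 ≤ (Good (k + 1) V).card := by
  have rn : (10:ℝ) ^ 8 ≤ n := by exact_mod_cast hnl
  have rn0 : (0:ℝ) < n := by linarith
  have hN0 : 0 ≤ N := by rw [hN]; positivity
  have a1 := not_rare (by omega) h1
  have a2 := not_rare (by omega) h2
  have b1 := full_lower (n := n) (s := k + 1) (t := k + 1) (by omega) (by omega) V
  have b2 := good_lower (n := n) (s := k + 1) (V := V) (𝓑 := Full (k + 1) V) (by omega)
    (fun F hF => (mem_Full.mp hF).1) (fun F hF => (mem_Full.mp hF).2)
  have c1 : n.choose k ≤ 2 * n.choose (k + 1) := by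
    have h := Nat.choose_succ_right_eq n k
    have h3 : n - k = k := by omega
    rw [h3] at h
    have : n.choose k * k ≤ (2 * n.choose (k + 1)) * k := by
      rw [← h]
      have : k + 1 ≤ 2 * k := by omega
      calc _ ≤ n.choose (k + 1) * (2 * k) := Nat.mul_le_mul_left _ this
        _ = _ := by ring
    exact Nat.le_of_mul_le_mul_right this (by omega)
  have hk2 : n / 2 = k := by omega
  have c2 : N ≤ 2 * (n.choose (k + 1) : ℝ) := by rw [hN, hk2]; exact_mod_cast c1
  have b1' : (n.choose (k + 1) : ℝ) ≤ (Full (k + 1) V).card + (sl (dual V) (k + 1)).card * n ^ 2 := by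
    exact_mod_cast b1
  have b2' : ((Full (k + 1) V).card : ℝ) ≤ (Good (k + 1) V).card + (sl V (k + 1)).card * n ^ 2 := by
    exact_mod_cast b2
  have d1 : ((sl (dual V) (k + 1)).card : ℝ) * n ^ 2 ≤ N / n ^ 20 * n ^ 2 := by gcongr
  have d2 : ((sl V (k + 1)).card : ℝ) * n ^ 2 ≤ N / n ^ 20 * n ^ 2 := by gcongr
  have d3 : N / n ^ 20 * n ^ 2 ≤ N / 100 := by
    calc N / n ^ 20 * n ^ 2 = N / n ^ 18 := by field_simp
      _ ≤ N / 100 := by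
        apply div_le_div_of_nonneg_left hN0 (by norm_num)
        calc (100:ℝ) ≤ n := by linarith
          _ ≤ n ^ 18 := le_self_pow₀ (by linarith) (by norm_num)
  have d4 : N / n ^ 11 ≤ N / 100 := by
    apply div_le_div_of_nonneg_left hN0 (by norm_num)
    calc (100:ℝ) ≤ n := by linarith
      _ ≤ n ^ 11 := le_self_pow₀ (by linarith) (by norm_num)
  linarith

lemma structure_odd {n j : ℕ} {N : ℝ} (hnl : 10 ^ 8 ≤ n) (hN : N = n.choose (n / 2)) (hnk : n = 2 * j + 1)
    {V : Finset (Finset (Fin n))} (hV : IsUF 0 V)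
    (h1 : ¬ Rare (j + 1) (N / n ^ 20) V) (h2 : ¬ Rare (j + 1) (N / n ^ 20) (dual V))
    (h3 : ¬ Rare j (N / n ^ 20) V) :
    N / n ^ 11 ≤ (Good (j + 1) V).card ∨ N / n ^ 11 ≤ (Good (j + 2) V).card := by
  have rn : (10:ℝ) ^ 8 ≤ n := by exact_mod_cast hnl
  have rn0 : (0:ℝ) < n := by linarith
  have hN0 : 0 ≤ N := by rw [hN]; positivity
  have a1 := not_rare (by omega) h1
  have a2 := not_rare (by omega) h2
  have d4 : N / n ^ 11 ≤ N / 100 := by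
    apply div_le_div_of_nonneg_left hN0 (by norm_num)
    calc (100:ℝ) ≤ n := by linarith
      _ ≤ n ^ 11 := le_self_pow₀ (by linarith) (by norm_num)
  by_cases hc : ((∂ (sl V (j + 1))).card : ℝ) < N / n ^ 10
  · left
    have h4 : ((sl V (j + 1)).card : ℝ) ≤ (∂ (sl V (j + 1))).card := by
      exact_mod_cast card_le_shadow (by omega) sl_card
    have b1 := full_lower (n := n) (s := j + 1) (t := j + 2) (by omega) (by omega) V
    have b2 := good_lower (n := n) (s := j + 1) (V := V) (𝓑 := Full (j + 1) V) (by omega)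
      (fun F hF => (mem_Full.mp hF).1) (fun F hF => (mem_Full.mp hF).2)
    have c1 : n.choose (n / 2) = n.choose (j + 1) := by
      apply Nat.choose_symm_of_eq_add; omega
    rw [← c1] at b1
    have b1' : N ≤ (Full (j + 1) V).card + (sl (dual V) (j + 2)).card * n ^ 2 := by
      rw [hN]; exact_mod_cast b1
    have b2' : ((Full (j + 1) V).card : ℝ) ≤ (Good (j + 1) V).card + (sl V (j + 1)).card * n ^ 2 := by
      exact_mod_cast b2
    have d1 : ((sl (dual V) (j + 2)).card : ℝ) * n ^ 2 ≤ N / n ^ 20 * n ^ 2 := by gcongr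
    have d2 : ((sl V (j + 1)).card : ℝ) * n ^ 2 ≤ N / n ^ 10 * n ^ 2 := by gcongr; linarith
    have d3 : N / n ^ 20 * n ^ 2 ≤ N / 100 := by
      calc N / n ^ 20 * n ^ 2 = N / n ^ 18 := by field_simp
        _ ≤ N / 100 := by
          apply div_le_div_of_nonneg_left hN0 (by norm_num)
          calc (100:ℝ) ≤ n := by linarith
            _ ≤ n ^ 18 := le_self_pow₀ (by linarith) (by norm_num)
    have d5 : N / n ^ 10 * n ^ 2 ≤ N / 100 := by
      calc N / n ^ 10 * n ^ 2 = N / n ^ 8 := by field_simp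
        _ ≤ N / 100 := by
          apply div_le_div_of_nonneg_left hN0 (by norm_num)
          calc (100:ℝ) ≤ n := by linarith
            _ ≤ n ^ 8 := le_self_pow₀ (by linarith) (by norm_num)
    linarith
  · right
    push Not at hc
    have hth : ¬ Thick j (sl V (j + 1)) := by
      intro hth
      refine h3 ⟨le_trans ?_ hc, hth⟩
      apply div_le_div_of_nonneg_left hN0 (by positivity)
      exact pow_le_pow_right₀ (by linarith) (by norm_num)
    have e1 := thin_count hnk (by omega) sl_card hth
    have e2 := good_lower (n := n) (s := j + 2) (V := V) (𝓑 := Bf j (Kf j (∂ (sl V (j + 1))))) (by omega)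
      (fun F hF => (mem_Bf.mp hF).1) (fun F hF => Bf_V hV hF)
    have e1' : ((∂ (sl V (j + 1))).card : ℝ) ≤ 4 * (Bf j (Kf j (∂ (sl V (j + 1))))).card := by
      exact_mod_cast e1
    have e2' : ((Bf j (Kf j (∂ (sl V (j + 1))))).card : ℝ) ≤ (Good (j + 2) V).card + (sl V (j + 2)).card * n ^ 2 := by
      exact_mod_cast e2
    have d1 : ((sl V (j + 2)).card : ℝ) * n ^ 2 ≤ N / n ^ 20 * n ^ 2 := by gcongr
    have d3 : N / n ^ 20 * n ^ 2 ≤ N / n ^ 11 := by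
      calc N / n ^ 20 * n ^ 2 = N / n ^ 18 := by field_simp
        _ ≤ _ := by
          apply div_le_div_of_nonneg_left hN0 (by positivity)
          exact pow_le_pow_right₀ (by linarith) (by norm_num)
    have d6 : N / n ^ 10 = n * (N / n ^ 11) := by field_simp
    have d7 : 100 * (N / n ^ 11) ≤ n * (N / n ^ 11) := by gcongr; linarith
    have d8 : 0 ≤ N / n ^ 11 := by positivity
    linarith

lemma UF_card_le (n : ℕ) : (UF n 0).card ≤ 2 * (allComplexes n).card := by
  have h1 : (UF n 0).card ≤ (insert ∅ ((allComplexes n).image (fun Δ => insert ∅ Δ))).card := by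
    apply card_le_card
    intro V hV
    rw [mem_UF] at hV
    rw [mem_insert]
    rcases V.eq_empty_or_nonempty with h | ⟨x, hx⟩
    · exact Or.inl h
    · right
      refine mem_image.mpr ⟨V.erase ∅, ?_, ?_⟩
      · simp only [allComplexes, mem_filter, mem_univ, true_and]
        constructor
        · intro y hy
          exact nonempty_iff_ne_empty.mpr (mem_erase.mp hy).1
        · intro y hy z hz hzy
          exact mem_erase.mpr ⟨nonempty_iff_ne_empty.mp hz, (hV y (mem_erase.mp hy).2).2 z hzy (Nat.zero_le _)⟩
      · exact insert_erase ((hV x hx).2 ∅ (empty_subset _) (Nat.zero_le _))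
  have h2 : 1 ≤ (allComplexes n).card := by
    apply card_pos.mpr
    refine ⟨∅, ?_⟩
    simp only [allComplexes, mem_filter, mem_univ, true_and]
    exact ⟨fun x hx => absurd hx (notMem_empty _), fun x hx => absurd hx (notMem_empty _)⟩
  have h3 := (h1.trans (card_insert_le _ _)).trans (Nat.add_le_add_right card_image_le 1)
  omega

lemma ins_UF {n : ℕ} {Δ : Finset (Finset (Fin n))} (h : IsComplex Δ) : IsUF 0 (insert ∅ Δ) := by
  intro x hx
  refine ⟨Nat.zero_le _, fun y hy _ => ?_⟩
  rcases y.eq_empty_or_nonempty with h1 | h1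
  · rw [h1]; exact mem_insert_self _ _
  · apply mem_insert_of_mem
    rcases mem_insert.mp hx with rfl | hx
    · rw [subset_empty.mp hy] at h1; simp at h1
    · exact h.2 x hx y h1 hy

lemma Good_ins {n s : ℕ} (hs : 3 ≤ s) (Δ : Finset (Finset (Fin n))) : Good s (insert ∅ Δ) ⊆ Good s Δ := by
  intro F hF
  obtain ⟨h1, h2, h3⟩ := mem_Good.mp hF
  refine mem_Good.mpr ⟨h1, fun y hy hys => ?_, fun G hG => h3 G (mem_insert_of_mem hG)⟩
  rcases mem_insert.mp (h2 y hy hys) with h | h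
  · rw [h, card_empty] at hys; omega
  · exact h

lemma ins_count {n : ℕ} (Q : Finset (Finset (Fin n)) → Prop) :
    ((allComplexes n).filter (fun Δ => Q (insert ∅ Δ))).card ≤ ((UF n 0).filter Q).card := by
  apply card_le_card_of_injOn (fun Δ => insert ∅ Δ)
  · intro Δ hΔ
    simp only [coe_filter, Set.mem_ofPred_eq, allComplexes, mem_filter, mem_univ, true_and] at hΔ ⊢
    exact ⟨mem_UF.mpr (ins_UF hΔ.1), hΔ.2⟩
  · intro Δ hΔ Δ' hΔ' h
    simp only [coe_filter, Set.mem_ofPred_eq, allComplexes, mem_filter, mem_univ, true_and] at hΔ hΔ'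
    have e : ∀ Δ : Finset (Finset (Fin n)), IsComplex Δ → ∅ ∉ Δ := by
      intro Δ h h2
      have := h.1 _ h2
      simp at this
    rw [← erase_insert (e Δ hΔ.1), ← erase_insert (e Δ' hΔ'.1)]
    simp only at h
    rw [h]

lemma rare_count {n m j : ℕ} {N : ℝ} (hp : Par n m) (hN : N = n.choose (n / 2)) (hN100 : (n:ℝ) ^ 100 ≤ N)
    (hn : n ≤ 2 * j + 1) (hj : j ≤ n) :
    (((UF n 0).filter (Rare j (N / n ^ 20))).card : ℝ) ≤ 1 / n * (UF n 0).card := by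
  have hnl := hp.n_large
  have rn : (10:ℝ) ^ 8 ≤ n := by exact_mod_cast hnl
  have rn0 : (0:ℝ) < n := by linarith
  have hN0 : 0 < N := lt_of_lt_of_le (by positivity) hN100
  have hH := Hyp_all hp hN100 (n - j) (j + 1) (by omega) (by omega)
  have h := rare (g0 := N / n ^ 20) hp hn hH ?_ ?_
  · refine le_trans (le_of_eq ?_) (h.trans ?_)
    · congr!
    · gcongr
      have e1 : N / n ^ 20 / n ^ 3 = n ^ 17 * (N / n ^ 40) := by field_simp
      have e2 : (n:ℝ) ≤ N / n ^ 40 := by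
        rw [le_div_iff₀ (by positivity)]
        refine le_trans ?_ hN100
        rw [← pow_succ']
        exact pow_le_pow_right₀ (by linarith) (by norm_num)
      have e3 : 2 * (N / n ^ 40) ≤ n ^ 17 * (N / n ^ 40) := by
        gcongr
        calc (2:ℝ) ≤ n := by linarith
          _ ≤ n ^ 17 := le_self_pow₀ (by linarith) (by norm_num)
      calc (2:ℝ) ^ (N / n ^ 40 - N / n ^ 20 / n ^ 3) ≤ (2:ℝ) ^ (-(n:ℝ)) := by
            apply Real.rpow_le_rpow_of_exponent_le (by norm_num)
            rw [e1]; linarith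
        _ = 1 / 2 ^ n := by rw [Real.rpow_neg (by norm_num), Real.rpow_natCast, one_div]
        _ ≤ 1 / n := by
            apply one_div_le_one_div_of_le rn0
            exact_mod_cast (Nat.lt_two_pow_self (n := n)).le
  · intro C hC
    have h1 : N / n ^ 20 * n ^ 20 = N := by field_simp
    rw [h1, hN]
    have h2 : C ⊆ powersetCard j univ := fun c hc => mem_powersetCard.mpr ⟨subset_univ _, hC c hc⟩
    have h3 := card_le_card h2
    rw [card_powersetCard, card_univ, Fintype.card_fin] at h3
    exact_mod_cast h3.trans (Nat.choose_le_middle j n)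
  · rw [le_div_iff₀ (by positivity), ← pow_add]
    refine le_trans ?_ hN100
    exact pow_le_pow_right₀ (by linarith) (by norm_num)

end ShellAux

namespace ShellAux
open Finset
open scoped FinsetFamily

lemma mid_large (n : ℕ) : 2 ^ n ≤ (n + 1) * n.choose (n / 2) := by
  rw [← Nat.sum_range_choose]
  calc _ ≤ ∑ i ∈ range (n + 1), n.choose (n / 2) := sum_le_sum (fun i _ => Nat.choose_le_middle i n)
    _ = _ := by simp

lemma mid_lower {n m t : ℕ} (hp : Par n m) (hm : t + m ≤ n) :
    2 ^ t * n ^ 48 ≤ n.choose (n / 2) := by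
  have hnl := hp.n_large
  have h1 : 2 ^ t * n ^ 48 * (n + 1) ≤ n.choose (n / 2) * (n + 1) := by
    calc 2 ^ t * n ^ 48 * (n + 1) ≤ 2 ^ t * n ^ 48 * (n * n) := Nat.mul_le_mul_left _ (by nlinarith)
      _ = 2 ^ t * n ^ 50 := by ring
      _ ≤ 2 ^ t * 2 ^ m := Nat.mul_le_mul_left _ hp.1
      _ = 2 ^ (t + m) := by rw [pow_add]
      _ ≤ 2 ^ n := Nat.pow_le_pow_right (by norm_num) hm
      _ ≤ _ := (mid_large n).trans (le_of_eq (mul_comm _ _))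
  exact Nat.le_of_mul_le_mul_right h1 (by omega)

lemma switch_count {n m s : ℕ} {N : ℝ} (hp : Par n m) (hN : N = n.choose (n / 2)) (hs : n < 2 * s)
    (hs2 : 2 * s ≤ n + 3) :
    (((allComplexes n).filter (fun Δ => Shellable Δ ∧ N / n ^ 11 ≤ (Good s Δ).card)).card : ℝ) ≤
      1 / n * (allComplexes n).card := by
  have hnl := hp.n_large
  have rn : (10:ℝ) ^ 8 ≤ n := by exact_mod_cast hnl
  have rn0 : (0:ℝ) < n := by linarith
  have hm : 10 ^ 8 * m ≤ n := le_trans (Nat.mul_le_mul_left _ (Nat.le_self_pow (by norm_num) m)) hp.2.1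
  have h0 := switch hs (by omega) (⌈N / n ^ 11⌉₊)
  set X := (allComplexes n).filter (fun Δ => Shellable Δ ∧ ⌈N / n ^ 11⌉₊ ≤ (Good s Δ).card) with hX
  have hXeq : ((allComplexes n).filter (fun Δ => Shellable Δ ∧ N / n ^ 11 ≤ (Good s Δ).card)).card ≤ X.card := by
    apply card_le_card
    intro Δ hΔ
    obtain ⟨h1, h2, h3⟩ := mem_filter.mp hΔ
    exact mem_filter.mpr ⟨h1, h2, Nat.ceil_le.mpr h3⟩
  have h1 : (X.card : ℝ) * ⌈N / n ^ 11⌉₊ ≤ 2 * 2 ^ s * (allComplexes n).card := by exact_mod_cast h0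
  have h2 : (X.card : ℝ) * (N / n ^ 11) ≤ X.card * ⌈N / n ^ 11⌉₊ := by
    gcongr
    exact Nat.le_ceil _
  have h3 := mid_lower (t := s + 1) hp (by omega)
  have h4 : (2:ℝ) * 2 ^ s * n ≤ N / n ^ 11 := by
    rw [le_div_iff₀ (by positivity)]
    have h5 : (2:ℝ) ^ (s + 1) * n ^ 48 ≤ N := by rw [hN]; exact_mod_cast h3
    refine le_trans ?_ h5
    calc (2:ℝ) * 2 ^ s * n * n ^ 11 = 2 ^ (s + 1) * n ^ 12 := by ring
      _ ≤ _ := by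
        gcongr
        · linarith
        · norm_num
  have h6 : (X.card : ℝ) * (2 * 2 ^ s * n) ≤ 2 * 2 ^ s * (allComplexes n).card :=
    (mul_le_mul_of_nonneg_left h4 (by positivity)).trans (h2.trans h1)
  have h7 : (X.card : ℝ) * n ≤ (allComplexes n).card := by
    have : (2 * 2 ^ s : ℝ) * (X.card * n) ≤ 2 * 2 ^ s * (allComplexes n).card := by linarith
    exact le_of_mul_le_mul_left this (by positivity)
  have h8 : (((allComplexes n).filter (fun Δ => Shellable Δ ∧ N / n ^ 11 ≤ (Good s Δ).card)).card : ℝ) ≤ X.card := by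
    exact_mod_cast hXeq
  refine h8.trans ?_
  rw [one_div, inv_mul_eq_div, le_div_iff₀ rn0]
  exact h7

lemma prob_bound {n m : ℕ} (hp : Par n m) : uniformProb n (fun Δ => Shellable Δ) ≤ 8 / n := by
  have hnl := hp.n_large
  have rn : (10:ℝ) ^ 8 ≤ n := by exact_mod_cast hnl
  have rn0 : (0:ℝ) < n := by linarith
  have hm : 10 ^ 8 * m ≤ n := le_trans (Nat.mul_le_mul_left _ (Nat.le_self_pow (by norm_num) m)) hp.2.1
  obtain ⟨N, hN⟩ : ∃ N : ℝ, N = n.choose (n / 2) := ⟨_, rfl⟩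
  have hN100 : (n:ℝ) ^ 100 ≤ N := by
    have h1 := mid_lower (t := 2 * m) hp (by omega)
    have h2 : n ^ 100 ≤ 2 ^ (2 * m) * n ^ 48 := by
      calc n ^ 100 = (n ^ 50) ^ 2 * 1 := by ring
        _ ≤ (2 ^ m) ^ 2 * n ^ 48 := Nat.mul_le_mul (Nat.pow_le_pow_left hp.1 2) (Nat.one_le_pow _ _ (by omega))
        _ = _ := by ring
    rw [hN]; exact_mod_cast h2.trans h1
  set 𝒞 := allComplexes n with h𝒞
  set c : ℝ := (𝒞.card : ℝ) with hc
  have hUF : ((UF n 0).card : ℝ) ≤ 2 * c := by rw [hc]; exact_mod_cast UF_card_le n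
  have hUF2 : 1 / n * ((UF n 0).card : ℝ) ≤ 2 / n * c := by
    calc 1 / n * ((UF n 0).card : ℝ) ≤ 1 / n * (2 * c) := by gcongr
      _ = _ := by ring
  have hc0 : 0 ≤ c / n := by positivity
  have r1 : ∀ j, n ≤ 2 * j + 1 → j ≤ n →
      ((𝒞.filter (fun Δ => Rare j (N / n ^ 20) (insert ∅ Δ))).card : ℝ) ≤ 2 / n * c := by
    intro j h1 h2
    refine le_trans ?_ ((rare_count hp hN hN100 h1 h2).trans hUF2)
    exact_mod_cast ins_count _
  have r2 : ∀ j, n ≤ 2 * j + 1 → j ≤ n →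
      ((𝒞.filter (fun Δ => Rare j (N / n ^ 20) (dual (insert ∅ Δ)))).card : ℝ) ≤ 2 / n * c := by
    intro j h1 h2
    refine le_trans ?_ ((rare_count hp hN hN100 h1 h2).trans hUF2)
    exact Nat.cast_le.mpr ((ins_count (n := n) (fun V => Rare j (N / (n:ℝ) ^ 20) (dual V))).trans
      (dual_count (Rare j (N / (n:ℝ) ^ 20))))
  have main : ((𝒞.filter (fun Δ => Shellable Δ)).card : ℝ) ≤ 8 / n * c := by
    have hgi : ∀ s, 3 ≤ s → ∀ Δ : Finset (Finset (Fin n)), N / n ^ 11 ≤ (Good s (insert ∅ Δ)).card →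
        N / n ^ 11 ≤ (Good s Δ).card := by
      intro s hs Δ h
      refine h.trans ?_
      exact_mod_cast card_le_card (Good_ins hs Δ)
    rcases Nat.even_or_odd' n with ⟨k, hk | hk⟩
    · have e1 := r1 k (by omega) (by omega)
      have e2 := r2 k (by omega) (by omega)
      have e3 := switch_count (s := k + 1) hp hN (by omega) (by omega)
      set X1 := 𝒞.filter (fun Δ => Rare k (N / n ^ 20) (insert ∅ Δ)) with hX1
      set X2 := 𝒞.filter (fun Δ => Rare k (N / n ^ 20) (dual (insert ∅ Δ))) with hX2
      set X3 := 𝒞.filter (fun Δ => Shellable Δ ∧ N / n ^ 11 ≤ (Good (k + 1) Δ).card) with hX3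
      have hsub : 𝒞.filter (fun Δ => Shellable Δ) ⊆ X1 ∪ X2 ∪ X3 := by
        intro Δ hΔ
        obtain ⟨h1, h2⟩ := mem_filter.mp hΔ
        simp only [mem_union, hX1, hX2, hX3, mem_filter]
        by_cases a1 : Rare k (N / n ^ 20) (insert ∅ Δ)
        · exact Or.inl (Or.inl ⟨h1, a1⟩)
        by_cases a2 : Rare k (N / n ^ 20) (dual (insert ∅ Δ))
        · exact Or.inl (Or.inr ⟨h1, a2⟩)
        exact Or.inr ⟨h1, h2, hgi _ (by omega) _ (structure_even hnl hN hk a1 a2)⟩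
      have h1 : (𝒞.filter (fun Δ => Shellable Δ)).card ≤ X1.card + X2.card + X3.card :=
        (card_le_card hsub).trans ((card_union_le _ _).trans (Nat.add_le_add_right (card_union_le _ _) _))
      have h2 : ((𝒞.filter (fun Δ => Shellable Δ)).card : ℝ) ≤ X1.card + X2.card + X3.card := by
        exact_mod_cast h1
      refine h2.trans ?_
      have f : ∀ q : ℝ, q / n * c = q * (c / n) := fun q => by ring
      rw [f] at *
      linarith
    · have e1 := r1 (k + 1) (by omega) (by omega)
      have e2 := r2 (k + 1) (by omega) (by omega)
      have e3 := r1 k (by omega) (by omega)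
      have e4 := switch_count (s := k + 1) hp hN (by omega) (by omega)
      have e5 := switch_count (s := k + 2) hp hN (by omega) (by omega)
      set X1 := 𝒞.filter (fun Δ => Rare (k + 1) (N / n ^ 20) (insert ∅ Δ)) with hX1
      set X2 := 𝒞.filter (fun Δ => Rare (k + 1) (N / n ^ 20) (dual (insert ∅ Δ))) with hX2
      set X3 := 𝒞.filter (fun Δ => Rare k (N / n ^ 20) (insert ∅ Δ)) with hX3
      set X4 := 𝒞.filter (fun Δ => Shellable Δ ∧ N / n ^ 11 ≤ (Good (k + 1) Δ).card) with hX4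
      set X5 := 𝒞.filter (fun Δ => Shellable Δ ∧ N / n ^ 11 ≤ (Good (k + 2) Δ).card) with hX5
      have hsub : 𝒞.filter (fun Δ => Shellable Δ) ⊆ (X1 ∪ X2) ∪ (X3 ∪ (X4 ∪ X5)) := by
        intro Δ hΔ
        obtain ⟨h1, h2⟩ := mem_filter.mp hΔ
        have hcx : IsComplex Δ := (mem_filter.mp h1).2
        simp only [mem_union, hX1, hX2, hX3, hX4, hX5, mem_filter]
        by_cases a1 : Rare (k + 1) (N / n ^ 20) (insert ∅ Δ)
        · exact Or.inl (Or.inl ⟨h1, a1⟩)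
        by_cases a2 : Rare (k + 1) (N / n ^ 20) (dual (insert ∅ Δ))
        · exact Or.inl (Or.inr ⟨h1, a2⟩)
        by_cases a3 : Rare k (N / n ^ 20) (insert ∅ Δ)
        · exact Or.inr (Or.inl ⟨h1, a3⟩)
        rcases structure_odd hnl hN hk (ins_UF hcx) a1 a2 a3 with h | h
        · exact Or.inr (Or.inr (Or.inl ⟨h1, h2, hgi _ (by omega) _ h⟩))
        · exact Or.inr (Or.inr (Or.inr ⟨h1, h2, hgi _ (by omega) _ h⟩))
      have h1 : (𝒞.filter (fun Δ => Shellable Δ)).card ≤ (X1.card + X2.card) + (X3.card + (X4.card + X5.card)) := by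
        refine (card_le_card hsub).trans ((card_union_le _ _).trans (Nat.add_le_add (card_union_le _ _) ?_))
        exact (card_union_le _ _).trans (Nat.add_le_add_left (card_union_le _ _) _)
      have h2 : ((𝒞.filter (fun Δ => Shellable Δ)).card : ℝ) ≤ (X1.card + X2.card) + (X3.card + (X4.card + X5.card)) := by
        exact_mod_cast h1
      refine h2.trans ?_
      have f : ∀ q : ℝ, q / n * c = q * (c / n) := fun q => by ring
      rw [f] at *
      linarith
  unfold uniformProb
  have hcpos : 0 < c := by
    have h1 : (0:ℝ) < (UF n 0).card := by
      have : (∅ : Finset (Finset (Fin n))) ∈ UF n 0 := mem_UF.mpr (fun x hx => absurd hx (notMem_empty _))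
      exact_mod_cast card_pos.mpr ⟨_, this⟩
    linarith
  rw [div_le_iff₀ hcpos]
  exact main

lemma par_eventually : ∀ᶠ n : ℕ in Filter.atTop, ∃ m, Par n m := by
  have h := tendsto_pow_const_div_const_pow_of_one_lt 6 (r := (2:ℝ)) (by norm_num)
  have h2 := (h.comp (Filter.tendsto_add_atTop_nat 1)).eventually (gt_mem_nhds (by positivity : (0:ℝ) < 1 / (2 * 10 ^ 8 * 50 ^ 6)))
  obtain ⟨L, hL⟩ := Filter.eventually_atTop.mp h2
  filter_upwards [Filter.eventually_ge_atTop (2 ^ L)] with n hn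
  have hn0 : n ≠ 0 := by
    have : 0 < 2 ^ L := by positivity
    omega
  have hl : L ≤ Nat.log 2 n := Nat.le_log_of_pow_le (by norm_num) hn
  have h3 := hL _ hl
  set l := Nat.log 2 n with hlog
  refine ⟨50 * (l + 1), ?_, ?_, by omega⟩
  · rw [mul_comm, pow_mul]
    exact Nat.pow_le_pow_left (Nat.lt_pow_succ_log_self (by norm_num) n).le 50
  · have h4 : 2 ^ l ≤ n := Nat.pow_log_le_self 2 hn0
    refine le_trans ?_ h4
    simp only [Function.comp] at h3
    rw [div_lt_div_iff₀ (by positivity) (by positivity)] at h3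
    have h5 : (10:ℝ) ^ 8 * (50 * ((l:ℝ) + 1)) ^ 6 ≤ 2 ^ l := by
      rw [pow_succ (2:ℝ) l] at h3
      push_cast at h3
      rw [mul_pow]
      linarith
    exact_mod_cast h5

end ShellAux

/-- For `Δ ~ U(n)`, with high probability `Δ` is not shellable. -/
theorem stmt14 :
    Filter.Tendsto (fun n : ℕ => uniformProb n (fun Δ => Shellable Δ))
      Filter.atTop (nhds 0) := by
  apply squeeze_zero' (g := fun n : ℕ => (8:ℝ) / n)
  · exact Filter.Eventually.of_forall (fun n => by unfold uniformProb; positivity)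
  · filter_upwards [ShellAux.par_eventually] with n hn
    obtain ⟨m, hm⟩ := hn
    exact ShellAux.prob_bound hm
  · exact tendsto_const_div_atTop_nhds_zero_nat 8
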